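/- arXiv:1701.07101 — 4 statements merged into one kernel-verified Lean document; each statement's English description precedes it below -/
import Mathlib

section
/- Let d = (d_1, …, d_n) be a graphical degree sequence with d_min ≥ 1 and 3 ≤ d_max ≤ (1/3)·√M, and let Z ∈ Ω(d). Then for every q ∈ {1, 2, 3}, one has |C(0,q)| ≤ (9/8)·M^2·|C(0, q−1)|, where C(0,q) is the set of good encodings consistent with Z having no 2-defect edges and exactly q (−1)-defect edges. -/
/-!
The proof is a double count of switches from `C(0,q)` to `C(0,q-1)`. Write `Δ` for the maximum
degree. Let `L ∈ C(0,q)` and let `L x y = -1`. As all degrees are positive, there are `a, b` with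
`L x a = L y b = 1`; one such choice (`nb`) is fixed. For an ordered pair `(c, e)` of label `1`
such that `a c` and `b e` are pairs of distinct vertices of label `0`, raising the labels of
`x y`, `a c`, `b e` by one and lowering those of `x a`, `c e`, `y b` by one (`switch`) gives an
element of `C(0,q-1)`: the six pairs are distinct, even if `a = b`, the row sums are kept, the
defect `x y` disappears and no new one arises.

Without 2-defects there are `M + 2q` ordered pairs of label `1`, and all but at most
`2((1 + Δ + 2q)Δ + 2q)` of them are admissible as `(c, e)` (`Enc0.card_choices`). Since `M ≥ 9Δ²`
and `Δ ≥ 3`, the `2q` orientations of the (−1)-defects give at least `M` switches out of `L`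
(`choices_bound`).

Conversely a switch is recovered from its result `L'` and the ordered pairs `(x, y)`, `(a, c)`,
`(b, e)`. By consistency `x y` is an edge of `Z`, and the other two have label `1` in `L'`, so
there are at most `M (M + 2(q-1))²` switches into `L'` (`double_count`). Finally
`(M + 4)² ≤ (9/8) M²` because `M ≥ 81`.
-/

open scoped Classical

noncomputable section

namespace SwitchChain

variable {n : ℕ}

/-- `Omega d` is the set of simple graphs on `[n] = Fin n` with degree sequence `d`. -/
def Omega (d : Fin n → ℕ) : Set (SimpleGraph (Fin n)) :=
  {G | ∀ v, {w | G.Adj v w}.ncard = d v}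

/-- `M d` is the sum of the degrees. -/
def M (d : Fin n → ℕ) : ℕ := ∑ j, d j

/-- The maximum degree. -/
def dmax (d : Fin n → ℕ) : ℕ := Finset.univ.sup d

/-- An encoding for the degree sequence `d`: a symmetric integer matrix with zero
diagonal, entries in `{-1, 0, 1, 2}`, and row sums `d`. -/
def IsEncoding (d : Fin n → ℕ) (L : Matrix (Fin n) (Fin n) ℤ) : Prop :=
  (∀ i j, L i j = L j i) ∧ (∀ i, L i i = 0) ∧
  (∀ i j, L i j = -1 ∨ L i j = 0 ∨ L i j = 1 ∨ L i j = 2) ∧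
  (∀ i, ∑ j, L i j = (d i : ℤ))

/-- The set of (unordered) edges of `L` carrying the label `c`. -/
def labelEdges (L : Matrix (Fin n) (Fin n) ℤ) (c : ℤ) : Set (Sym2 (Fin n)) :=
  {e | ∃ x y : Fin n, e = s(x, y) ∧ x ≠ y ∧ L x y = c}

/-- Every defect edge of `L` occurs, with its label, in the labelled edge set `D`. -/
def DefectsWithin (L : Matrix (Fin n) (Fin n) ℤ) (D : Set (Sym2 (Fin n) × ℤ)) : Prop :=
  ∀ x y : Fin n, x ≠ y → (L x y = 2 ∨ L x y = -1) → (s(x, y), L x y) ∈ D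

/-- A valid encoding: at most four defect edges, forming a labelled subgraph of one
of the five possible configurations. -/
def ValidEncoding (d : Fin n → ℕ) (L : Matrix (Fin n) (Fin n) ℤ) : Prop :=
  IsEncoding d L ∧
  (labelEdges L 2).ncard + (labelEdges L (-1)).ncard ≤ 4 ∧
  ∃ (a b c u e f : Fin n) (ℓ : ℤ), (ℓ = -1 ∨ ℓ = 2) ∧
    (([a, b, c, u].Pairwise (· ≠ ·) ∧ e ≠ f ∧
        e ∉ ({a, b, c, u} : Set (Fin n)) ∧ f ∉ ({a, b, c, u} : Set (Fin n)) ∧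
        DefectsWithin L {(s(a, b), 2), (s(b, c), -1), (s(b, u), -1), (s(e, f), ℓ)}) ∨
     ([a, b, c, u, e].Pairwise (· ≠ ·) ∧
        DefectsWithin L {(s(a, b), 2), (s(b, c), -1), (s(b, u), -1), (s(u, e), ℓ)}) ∨
     ([a, b, c, u, e].Pairwise (· ≠ ·) ∧
        DefectsWithin L {(s(a, b), -1), (s(b, c), -1), (s(b, u), 2), (s(u, e), ℓ)}) ∨
     ([a, b, c, u].Pairwise (· ≠ ·) ∧
        DefectsWithin L {(s(a, b), -1), (s(b, c), -1), (s(b, u), 2), (s(u, c), ℓ)}) ∨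
     ([a, b, c, u].Pairwise (· ≠ ·) ∧
        DefectsWithin L {(s(a, b), 2), (s(b, c), -1), (s(b, u), -1), (s(u, c), ℓ)}))

/-- A good encoding: a valid encoding satisfying the degree conditions of
Lemma 2.3. -/
def GoodEncoding (d : Fin n → ℕ) (L : Matrix (Fin n) (Fin n) ℤ) : Prop :=
  ValidEncoding d L ∧
  (∀ x y : Fin n, x ≠ y → L x y = 2 → 2 ≤ d x ∧ 2 ≤ d y) ∧
  (∀ x y z : Fin n, x ≠ y → y ≠ z → x ≠ z → L x y = 2 → L y z = 2 → 4 ≤ d y) ∧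
  (∀ x y z : Fin n, x ≠ y → y ≠ z → x ≠ z → L x y = 2 → L y z = -1 → 3 ≤ d y)

/-- The 0-1 adjacency matrix of a simple graph, over `ℤ`. -/
def adjMat (Z : SimpleGraph (Fin n)) : Matrix (Fin n) (Fin n) ℤ :=
  fun i j => if Z.Adj i j then 1 else 0

/-- `L` is consistent with `Z` if every entry of `L + Z` lies in `{0, 1, 2}`. -/
def ConsistentWith (L : Matrix (Fin n) (Fin n) ℤ) (Z : SimpleGraph (Fin n)) : Prop :=
  ∀ i j, L i j + adjMat Z i j = 0 ∨ L i j + adjMat Z i j = 1 ∨ L i j + adjMat Z i j = 2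


/-- `C(p,q)`: the set of good encodings consistent with `Z` having exactly `p`
2-defect edges and exactly `q` (−1)-defect edges. -/
def Cset (d : Fin n → ℕ) (Z : SimpleGraph (Fin n)) (p q : ℕ) :
    Set (Matrix (Fin n) (Fin n) ℤ) :=
  {L | GoodEncoding d L ∧ ConsistentWith L Z ∧
    (labelEdges L 2).ncard = p ∧ (labelEdges L (-1)).ncard = q}

/-! ### Counting the pairs with a given label -/

/-- The graph whose edges are the pairs of distinct vertices with label `c`. -/
def labelGraph (L : Matrix (Fin n) (Fin n) ℤ) (hs : ∀ i j, L i j = L j i) (c : ℤ) :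
    SimpleGraph (Fin n) where
  Adj x y := x ≠ y ∧ L x y = c
  symm := ⟨fun x y h => ⟨h.1.symm, by rw [hs]; exact h.2⟩⟩
  loopless := ⟨fun _ h => h.1 rfl⟩

lemma labelEdges_eq (L : Matrix (Fin n) (Fin n) ℤ) (hs : ∀ i j, L i j = L j i) (c : ℤ) :
    labelEdges L c = (labelGraph L hs c).edgeSet := by
  ext e
  induction e using Sym2.ind with
  | _ u v =>
    simp only [labelEdges, Set.mem_ofPred_eq, SimpleGraph.mem_edgeSet, labelGraph]
    constructor
    · rintro ⟨x, y, h, hne, hL⟩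
      rcases Sym2.eq_iff.1 h with ⟨rfl, rfl⟩ | ⟨rfl, rfl⟩
      · exact ⟨hne, hL⟩
      · exact ⟨hne.symm, by rw [hs]; exact hL⟩
    · rintro ⟨h1, h2⟩
      exact ⟨u, v, rfl, h1, h2⟩

/-- The vertices joined to `x` by label `c`. -/
def lab (L : Matrix (Fin n) (Fin n) ℤ) (c : ℤ) (x : Fin n) : Finset (Fin n) :=
  Finset.univ.filter fun y => L x y = c

/-- The ordered pairs with label `c`. -/
def labPairs (L : Matrix (Fin n) (Fin n) ℤ) (c : ℤ) : Finset (Fin n × Fin n) :=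
  Finset.univ.filter fun p => L p.1 p.2 = c

lemma card_labPairs (L : Matrix (Fin n) (Fin n) ℤ) (c : ℤ) :
    (labPairs L c).card = ∑ x, (lab L c x).card := by
  simp only [labPairs, lab, Finset.card_filter, Fintype.sum_prod_type]

lemma lab_card_eq_degree (L : Matrix (Fin n) (Fin n) ℤ) (hs : ∀ i j, L i j = L j i)
    (hd : ∀ i, L i i = 0) (c : ℤ) (hc : c ≠ 0) (x : Fin n) :
    (lab L c x).card = (labelGraph L hs c).degree x := by
  rw [← SimpleGraph.card_neighborFinset_eq_degree]
  congr 1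
  ext y
  rw [SimpleGraph.mem_neighborFinset]
  simp only [lab, Finset.mem_filter, Finset.mem_univ, true_and, labelGraph]
  constructor
  · intro h
    refine ⟨?_, h⟩
    rintro rfl
    exact hc (h ▸ hd x)
  · exact fun h => h.2

lemma sum_lab_card (L : Matrix (Fin n) (Fin n) ℤ) (hs : ∀ i j, L i j = L j i)
    (hd : ∀ i, L i i = 0) (c : ℤ) (hc : c ≠ 0) :
    ∑ x, (lab L c x).card = 2 * (labelEdges L c).ncard := by
  rw [labelEdges_eq L hs, ← SimpleGraph.coe_edgeFinset, Set.ncard_coe_finset,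
    ← SimpleGraph.sum_degrees_eq_twice_card_edges]
  exact Finset.sum_congr rfl fun x _ => lab_card_eq_degree L hs hd c hc x

lemma lab_card_le (L : Matrix (Fin n) (Fin n) ℤ) (hs : ∀ i j, L i j = L j i)
    (hd : ∀ i, L i i = 0) (c : ℤ) (hc : c ≠ 0) (x : Fin n) :
    (lab L c x).card ≤ (labelEdges L c).ncard := by
  rw [labelEdges_eq L hs, ← SimpleGraph.coe_edgeFinset, Set.ncard_coe_finset,
    lab_card_eq_degree L hs hd c hc, ← SimpleGraph.card_incidenceFinset_eq_degree]
  exact Finset.card_le_card (SimpleGraph.incidenceFinset_subset _ _)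

/-! ### Encodings without 2-defects -/

/-- The part of membership in `C(0,q)` used by the counting. -/
structure Enc0 (d : Fin n → ℕ) (L : Matrix (Fin n) (Fin n) ℤ) (q : ℕ) : Prop where
  symm : ∀ i j, L i j = L j i
  diag : ∀ i, L i i = 0
  val : ∀ i j, L i j = -1 ∨ L i j = 0 ∨ L i j = 1
  row : ∀ i, ∑ j, L i j = (d i : ℤ)
  neg : (labelEdges L (-1)).ncard = q

lemma Cset_enc0 {d : Fin n → ℕ} {Z : SimpleGraph (Fin n)} {q : ℕ}
    {L : Matrix (Fin n) (Fin n) ℤ} (h : L ∈ Cset d Z 0 q) : Enc0 d L q := by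
  obtain ⟨⟨⟨⟨hs, hd, hv, hr⟩, -, -⟩, -⟩, -, h2, hq⟩ := h
  refine ⟨hs, hd, fun i j => ?_, hr, hq⟩
  have he : labelEdges L 2 = ∅ := (Set.ncard_eq_zero (Set.toFinite _)).1 h2
  rcases hv i j with h | h | h | h
  · exact Or.inl h
  · exact Or.inr (Or.inl h)
  · exact Or.inr (Or.inr h)
  · exfalso
    have hm : s(i, j) ∈ labelEdges L 2 := by
      refine ⟨i, j, rfl, ?_, h⟩
      rintro rfl
      rw [hd] at h
      omega
    rw [he] at hm
    exact hm

namespace Enc0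

variable {d : Fin n → ℕ} {L : Matrix (Fin n) (Fin n) ℤ} {q : ℕ}

lemma lab_one_card (h : Enc0 d L q) (x : Fin n) :
    (lab L 1 x).card = d x + (lab L (-1) x).card := by
  have hrow := h.row x
  have : ∀ j, L x j = (if L x j = 1 then (1 : ℤ) else 0) - (if L x j = -1 then 1 else 0) := by
    intro j
    rcases h.val x j with h | h | h <;> simp [h]
  rw [Finset.sum_congr rfl fun j _ => this j, Finset.sum_sub_distrib] at hrow
  simp only [Finset.sum_boole] at hrow
  unfold lab
  omega

lemma sum_neg (h : Enc0 d L q) : ∑ x, (lab L (-1) x).card = 2 * q := by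
  rw [sum_lab_card L h.symm h.diag _ (by norm_num), h.neg]

lemma card_pairs_one (h : Enc0 d L q) : (labPairs L 1).card = M d + 2 * q := by
  rw [card_labPairs, Finset.sum_congr rfl fun x _ => h.lab_one_card x, Finset.sum_add_distrib,
    h.sum_neg, M]

lemma card_pairs_neg (h : Enc0 d L q) : (labPairs L (-1)).card = 2 * q := by
  rw [card_labPairs, h.sum_neg]

end Enc0

/-- The vertices that cannot be joined to `a` by raising a label from `0` to `1`. -/
def blocked (L : Matrix (Fin n) (Fin n) ℤ) (a : Fin n) : Finset (Fin n) :=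
  Finset.univ.filter fun c => c = a ∨ L a c ≠ 0

/-- The ordered 1-labelled pairs `(c, e)` such that `a c` and `b e` are pairs of
distinct vertices with label `0`. -/
def choices (L : Matrix (Fin n) (Fin n) ℤ) (a b : Fin n) : Finset (Fin n × Fin n) :=
  (labPairs L 1).filter fun p => p.1 ∉ blocked L a ∧ p.2 ∉ blocked L b

lemma degree_le_dmax (d : Fin n → ℕ) (x : Fin n) : d x ≤ dmax d :=
  Finset.le_sup (f := d) (Finset.mem_univ x)

lemma Enc0.card_blocked_le {d : Fin n → ℕ} {L : Matrix (Fin n) (Fin n) ℤ} {q : ℕ}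
    (h : Enc0 d L q) (a : Fin n) : (blocked L a).card ≤ 1 + dmax d + 2 * q := by
  have hsub : blocked L a ⊆ {a} ∪ (lab L 1 a ∪ lab L (-1) a) := by
    intro c hc
    simp only [blocked, lab, Finset.mem_filter, Finset.mem_univ, true_and, Finset.mem_union,
      Finset.mem_singleton] at hc ⊢
    rcases h.val a c with h | h | h <;> simp_all
  have h1 := Finset.card_le_card hsub
  have h2 := Finset.card_union_le {a} (lab L 1 a ∪ lab L (-1) a)
  have h3 := Finset.card_union_le (lab L 1 a) (lab L (-1) a)
  have h4 := h.lab_one_card a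
  have h5 := lab_card_le L h.symm h.diag (-1) (by norm_num) a
  rw [h.neg] at h5
  have h6 := degree_le_dmax d a
  rw [Finset.card_singleton] at h2
  omega

lemma Enc0.sum_blocked_le {d : Fin n → ℕ} {L : Matrix (Fin n) (Fin n) ℤ} {q : ℕ}
    (h : Enc0 d L q) (a : Fin n) :
    ∑ c ∈ blocked L a, (lab L 1 c).card ≤ (1 + dmax d + 2 * q) * dmax d + 2 * q := by
  rw [Finset.sum_congr rfl fun x _ => h.lab_one_card x, Finset.sum_add_distrib]
  apply Nat.add_le_add
  · refine (Finset.sum_le_card_nsmul _ _ _ fun x _ => degree_le_dmax d x).trans ?_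
    rw [smul_eq_mul]
    exact Nat.mul_le_mul_right _ (h.card_blocked_le a)
  · rw [← h.sum_neg]
    exact Finset.sum_le_sum_of_subset (Finset.subset_univ _)

/-- At most `(1 + Δ + 2q)Δ + 2q` of the `M + 2q` ordered 1-labelled pairs are lost at each end. -/
lemma Enc0.card_choices {d : Fin n → ℕ} {L : Matrix (Fin n) (Fin n) ℤ} {q : ℕ}
    (h : Enc0 d L q) (a b : Fin n) :
    M d + 2 * q ≤ (choices L a b).card + 2 * ((1 + dmax d + 2 * q) * dmax d + 2 * q) := by
  have hsub : labPairs L 1 ⊆ choices L a b ∪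
      ((labPairs L 1).filter (fun p => p.1 ∈ blocked L a) ∪
       (labPairs L 1).filter (fun p => p.2 ∈ blocked L b)) := by
    intro p hp
    simp only [choices, Finset.mem_union, Finset.mem_filter, hp, true_and]
    tauto
  have h1 := Finset.card_le_card hsub
  have h2 := Finset.card_union_le (choices L a b)
      ((labPairs L 1).filter (fun p => p.1 ∈ blocked L a) ∪
       (labPairs L 1).filter (fun p => p.2 ∈ blocked L b))
  have h3 := Finset.card_union_le ((labPairs L 1).filter (fun p => p.1 ∈ blocked L a))
       ((labPairs L 1).filter (fun p => p.2 ∈ blocked L b))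
  have h4 : ((labPairs L 1).filter (fun p => p.1 ∈ blocked L a)).card
      = ∑ c ∈ blocked L a, (lab L 1 c).card := by
    rw [← Finset.card_sigma]
    refine Finset.card_bij' (fun p _ => ⟨p.1, p.2⟩) (fun p _ => (p.1, p.2)) ?_ ?_ ?_ ?_
    · intro p hp
      simp_all [labPairs, lab]
    · intro p hp
      simp_all [labPairs, lab]
    · intros; rfl
    · intros; rfl
  have h5 : ((labPairs L 1).filter (fun p => p.2 ∈ blocked L b)).card
      = ∑ c ∈ blocked L b, (lab L 1 c).card := by
    rw [← Finset.card_sigma]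
    refine Finset.card_bij' (fun p _ => ⟨p.2, p.1⟩) (fun p _ => (p.2, p.1)) ?_ ?_ ?_ ?_
    · intro p hp
      have := h.symm p.1 p.2
      simp_all [labPairs, lab]
    · intro p hp
      have := h.symm p.1 p.2
      simp_all [labPairs, lab]
    · intros; rfl
    · intros; rfl
  have h6 := h.sum_blocked_le a
  have h7 := h.sum_blocked_le b
  have h8 := h.card_pairs_one
  omega

/-! ### The switch along a closed alternating 6-walk -/

/-- The symmetric 0-1 matrix with support the unordered pair `e`. -/
def ind (e : Sym2 (Fin n)) (u v : Fin n) : ℤ := if s(u, v) = e then 1 else 0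

/-- The change made by the switch along the closed walk `x y b e c a`. -/
def change (x y a b c e : Fin n) (u v : Fin n) : ℤ :=
  ind s(x, y) u v - ind s(x, a) u v + ind s(a, c) u v - ind s(c, e) u v
    + ind s(b, e) u v - ind s(y, b) u v

/-- Raise the labels of `x y`, `a c`, `b e` by one and lower those of `x a`, `c e`, `y b`. -/
def switch (L : Matrix (Fin n) (Fin n) ℤ) (x y a b c e : Fin n) : Matrix (Fin n) (Fin n) ℤ :=
  fun u v => L u v + change x y a b c e u v

lemma sum_ind (p r u : Fin n) (hpr : p ≠ r) :
    ∑ v, ind s(p, r) u v = (if u = p then 1 else 0) + (if u = r then 1 else 0) := by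
  have : ∀ v, ind s(p, r) u v =
      (if v = r then (if u = p then (1 : ℤ) else 0) else 0)
        + (if v = p then (if u = r then 1 else 0) else 0) := by
    intro v
    simp only [ind, Sym2.eq_iff]
    by_cases h1 : u = p <;> by_cases h2 : v = r <;> by_cases h3 : u = r <;>
      by_cases h4 : v = p <;> simp_all
  rw [Finset.sum_congr rfl fun v _ => this v, Finset.sum_add_distrib]
  simp

/-- The closed walk `x y b e c a` along which `L` can be switched: its labels are
`-1, 1, 0, 1, 0, 1` in this order, and no step stays at a vertex. -/
structure Walk6 (L : Matrix (Fin n) (Fin n) ℤ) (x y a b c e : Fin n) : Prop where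
  xy : L x y = -1
  xa : L x a = 1
  yb : L y b = 1
  ce : L c e = 1
  ac : L a c = 0
  be : L b e = 0
  nac : a ≠ c
  nbe : b ≠ e

section
variable {d : Fin n → ℕ} {L : Matrix (Fin n) (Fin n) ℤ} {q : ℕ} {x y a b c e : Fin n}

/-- The switch changes `x y` from `-1` to `0`, three pairs from `1` to `0`, two pairs (`a c` and
`b e`) from `0` to `1`, and nothing else. -/
lemma switch_cases (h : Enc0 d L q) (w : Walk6 L x y a b c e) (u v : Fin n) :
    (s(u, v) = s(x, y) ∧ L u v = -1 ∧ switch L x y a b c e u v = 0) ∨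
    (s(u, v) ≠ s(x, y) ∧ L u v = 1 ∧ switch L x y a b c e u v = 0) ∨
    (s(u, v) ≠ s(x, y) ∧ u ≠ v ∧ L u v = 0 ∧ switch L x y a b c e u v = 1) ∨
    (s(u, v) ≠ s(x, y) ∧ s(u, v) ≠ s(a, c) ∧ s(u, v) ≠ s(b, e) ∧
      switch L x y a b c e u v = L u v) := by
  obtain ⟨h1, h2, h3, h4, h5, h6, h7, h8⟩ := w
  -- The labels are functions of the unordered pair, so pairs with different labels differ;
  -- the three 1-labelled pairs differ, as do the two 0-labelled ones.
  have key : ∀ {p r : Fin n}, s(u, v) = s(p, r) → L u v = L p r := by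
    intro p r hh
    rcases Sym2.eq_iff.1 hh with ⟨rfl, rfl⟩ | ⟨rfl, rfl⟩
    · rfl
    · exact h.symm _ _
  have hs := h.symm
  have hd := h.diag
  have d1 : s(x, a) ≠ s(c, e) := by
    intro hh
    rcases Sym2.eq_iff.1 hh with ⟨rfl, rfl⟩ | ⟨rfl, rfl⟩
    · rw [hs] at h5; omega
    · exact h7 rfl
  have d2 : s(y, b) ≠ s(c, e) := by
    intro hh
    rcases Sym2.eq_iff.1 hh with ⟨rfl, rfl⟩ | ⟨rfl, rfl⟩
    · exact h8 rfl
    · rw [hs] at h6; omega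
  have d3 : s(x, a) ≠ s(y, b) := by
    intro hh
    rcases Sym2.eq_iff.1 hh with ⟨rfl, rfl⟩ | ⟨rfl, rfl⟩
    · rw [hd] at h1; omega
    · omega
  have d4 : s(a, c) ≠ s(b, e) := by
    intro hh
    rcases Sym2.eq_iff.1 hh with ⟨rfl, rfl⟩ | ⟨rfl, rfl⟩
    · rw [hd] at h4; omega
    · rw [hs] at h4; omega
  have hne : ∀ {p r : Fin n}, p ≠ r → s(u, v) = s(p, r) → u ≠ v := by
    intro p r hpr hh huv
    rcases Sym2.eq_iff.1 hh with ⟨rfl, rfl⟩ | ⟨rfl, rfl⟩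
    · exact hpr huv
    · exact hpr huv.symm
  simp only [switch, change, ind]
  by_cases e1 : s(u, v) = s(x, y)
  · have k := key e1
    left
    have f2 : s(u, v) ≠ s(x, a) := fun hh => by have := key hh; omega
    have f3 : s(u, v) ≠ s(a, c) := fun hh => by have := key hh; omega
    have f4 : s(u, v) ≠ s(c, e) := fun hh => by have := key hh; omega
    have f5 : s(u, v) ≠ s(b, e) := fun hh => by have := key hh; omega
    have f6 : s(u, v) ≠ s(y, b) := fun hh => by have := key hh; omega
    refine ⟨e1, by omega, ?_⟩
    rw [if_pos e1, if_neg f2, if_neg f3, if_neg f4, if_neg f5, if_neg f6]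
    omega
  right
  have hrest : ∀ z : ℤ, L u v = z → z = 1 → s(u, v) ≠ s(a, c) ∧ s(u, v) ≠ s(b, e) := by
    intro z hz hz1
    exact ⟨fun hh => by have := key hh; omega, fun hh => by have := key hh; omega⟩
  have hrest0 : L u v = 0 → s(u, v) ≠ s(x, a) ∧ s(u, v) ≠ s(c, e) ∧ s(u, v) ≠ s(y, b) := by
    intro hz
    exact ⟨fun hh => by have := key hh; omega, fun hh => by have := key hh; omega,
      fun hh => by have := key hh; omega⟩
  by_cases e2 : s(u, v) = s(x, a)
  · have k := key e2
    obtain ⟨g1, g2⟩ := hrest _ rfl (by omega)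
    have g3 : s(u, v) ≠ s(c, e) := e2 ▸ d1
    have g4 : s(u, v) ≠ s(y, b) := e2 ▸ d3
    left
    refine ⟨e1, by omega, ?_⟩
    rw [if_neg e1, if_pos e2, if_neg g1, if_neg g3, if_neg g2, if_neg g4]
    omega
  by_cases e4 : s(u, v) = s(c, e)
  · have k := key e4
    obtain ⟨g1, g2⟩ := hrest _ rfl (by omega)
    have g4 : s(u, v) ≠ s(y, b) := e4 ▸ d2.symm
    left
    refine ⟨e1, by omega, ?_⟩
    rw [if_neg e1, if_neg e2, if_neg g1, if_pos e4, if_neg g2, if_neg g4]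
    omega
  by_cases e6 : s(u, v) = s(y, b)
  · have k := key e6
    obtain ⟨g1, g2⟩ := hrest _ rfl (by omega)
    left
    refine ⟨e1, by omega, ?_⟩
    rw [if_neg e1, if_neg e2, if_neg g1, if_neg e4, if_neg g2, if_pos e6]
    omega
  right
  by_cases e3 : s(u, v) = s(a, c)
  · have k := key e3
    have g : s(u, v) ≠ s(b, e) := e3 ▸ d4
    left
    refine ⟨e1, hne h7 e3, by omega, ?_⟩
    rw [if_neg e1, if_neg e2, if_pos e3, if_neg e4, if_neg g, if_neg e6]
    omega
  by_cases e5 : s(u, v) = s(b, e)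
  · have k := key e5
    left
    refine ⟨e1, hne h8 e5, by omega, ?_⟩
    rw [if_neg e1, if_neg e2, if_neg e3, if_neg e4, if_pos e5, if_neg e6]
    omega
  right
  refine ⟨e1, e3, e5, ?_⟩
  rw [if_neg e1, if_neg e2, if_neg e3, if_neg e4, if_neg e5, if_neg e6]
  omega

lemma switch_symm (hs : ∀ i j, L i j = L j i) (u v : Fin n) :
    switch L x y a b c e u v = switch L x y a b c e v u := by
  simp only [switch, change, ind, Sym2.eq_swap (a := u) (b := v), hs u v]

lemma switch_row (h : Enc0 d L q) (w : Walk6 L x y a b c e) (u : Fin n) :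
    ∑ v, switch L x y a b c e u v = d u := by
  have ne : ∀ {p r : Fin n}, L p r ≠ 0 → p ≠ r := by
    rintro p r hh rfl
    exact hh (h.diag p)
  have h1 := w.xy
  have h2 := w.xa
  have h3 := w.yb
  have h4 := w.ce
  simp only [switch, change, Finset.sum_add_distrib, Finset.sum_sub_distrib]
  rw [h.row, sum_ind _ _ _ (ne (by omega : L x y ≠ 0)), sum_ind _ _ _ (ne (by omega : L x a ≠ 0)),
    sum_ind _ _ _ w.nac, sum_ind _ _ _ (ne (by omega : L c e ≠ 0)), sum_ind _ _ _ w.nbe,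
    sum_ind _ _ _ (ne (by omega : L y b ≠ 0))]
  ring

lemma switch_labelEdges (h : Enc0 d L q) (w : Walk6 L x y a b c e) :
    labelEdges (switch L x y a b c e) (-1) = labelEdges L (-1) \ {s(x, y)} := by
  ext f
  simp only [labelEdges, Set.mem_ofPred_eq, Set.mem_sdiff, Set.mem_singleton_iff]
  constructor
  · rintro ⟨u, v, rfl, hne, huv⟩
    rcases switch_cases h w u v with ⟨_, _, h3⟩ | ⟨_, _, h3⟩ | ⟨_, _, _, h3⟩ | ⟨h1, _, _, h3⟩
    · omega
    · omega
    · omega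
    · exact ⟨⟨u, v, rfl, hne, by omega⟩, h1⟩
  · rintro ⟨⟨u, v, rfl, hne, huv⟩, hx⟩
    refine ⟨u, v, rfl, hne, ?_⟩
    rcases switch_cases h w u v with ⟨h1, _, h3⟩ | ⟨_, _, h3⟩ | ⟨_, _, _, h3⟩ | ⟨h1, _, _, h3⟩
    · exact absurd h1 hx
    · omega
    · omega
    · omega

lemma switch_mem {Z : SimpleGraph (Fin n)} (hL : L ∈ Cset d Z 0 q)
    (w : Walk6 L x y a b c e) : switch L x y a b c e ∈ Cset d Z 0 (q - 1) := by
  have h := Cset_enc0 hL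
  have hc := switch_cases h w
  obtain ⟨⟨⟨-, h4, a', b', c', u', e', f', l', hl, hcfg⟩, -⟩, hcon, -, hq⟩ := hL
  have hno2 : ∀ u v, switch L x y a b c e u v ≠ 2 := by
    intro u v
    have := h.val u v
    rcases hc u v with h | h | h | h <;> omega
  have hneg : ∀ u v, switch L x y a b c e u v = -1 → L u v = -1 := by
    intro u v huv
    rcases hc u v with h | h | h | h <;> omega
  have hdw : ∀ D, DefectsWithin L D → DefectsWithin (switch L x y a b c e) D := by
    intro D hD u v hne huv
    have h1 : switch L x y a b c e u v = -1 := huv.resolve_left (hno2 u v)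
    have h2 := hneg u v h1
    have := hD u v hne (Or.inr h2)
    rwa [h2, ← h1] at this
  have h2e : labelEdges (switch L x y a b c e) 2 = ∅ := by
    ext f
    simp only [labelEdges, Set.mem_ofPred_eq, Set.mem_empty_iff_false, iff_false]
    rintro ⟨u, v, -, -, huv⟩
    exact hno2 u v huv
  have hxy : s(x, y) ∈ labelEdges L (-1) := by
    refine ⟨x, y, rfl, ?_, w.xy⟩
    rintro rfl
    have := w.xy
    rw [h.diag] at this
    omega
  have hm1 : (labelEdges (switch L x y a b c e) (-1)).ncard = q - 1 := by
    rw [switch_labelEdges h w, Set.ncard_sdiff_singleton_of_mem hxy, hq]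
  have hval : ∀ u v, switch L x y a b c e u v = -1 ∨ switch L x y a b c e u v = 0 ∨
      switch L x y a b c e u v = 1 ∨ switch L x y a b c e u v = 2 := by
    intro u v
    have := h.val u v
    rcases hc u v with h | h | h | h <;> omega
  refine ⟨⟨⟨⟨switch_symm h.symm, ?_, hval, switch_row h w⟩, ?_, ?_⟩, ?_, ?_, ?_⟩, ?_, ?_, hm1⟩
  · intro u
    have := h.diag u
    rcases hc u u with h | h | h | h
    · exact h.2.2
    · exact h.2.2
    · exact absurd rfl h.2.1
    · rw [h.2.2.2, this]
  · rw [h2e, Set.ncard_empty, hm1]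
    omega
  · refine ⟨a', b', c', u', e', f', l', hl, ?_⟩
    rcases hcfg with hh | hh | hh | hh | hh
    · exact Or.inl ⟨hh.1, hh.2.1, hh.2.2.1, hh.2.2.2.1, hdw _ hh.2.2.2.2⟩
    · exact Or.inr (Or.inl ⟨hh.1, hdw _ hh.2⟩)
    · exact Or.inr (Or.inr (Or.inl ⟨hh.1, hdw _ hh.2⟩))
    · exact Or.inr (Or.inr (Or.inr (Or.inl ⟨hh.1, hdw _ hh.2⟩)))
    · exact Or.inr (Or.inr (Or.inr (Or.inr ⟨hh.1, hdw _ hh.2⟩)))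
  · exact fun u v _ huv => absurd huv (hno2 u v)
  · exact fun u v _ _ _ _ huv => absurd huv (hno2 u v)
  · exact fun u v _ _ _ _ huv => absurd huv (hno2 u v)
  · intro u v
    have hz : adjMat Z u v = 0 ∨ adjMat Z u v = 1 := by
      unfold adjMat
      split_ifs <;> simp
    have := hcon u v
    rcases hc u v with h | h | h | h <;> omega
  · rw [h2e, Set.ncard_empty]

lemma switch_ac (h : Enc0 d L q) (w : Walk6 L x y a b c e) :
    switch L x y a b c e a c = 1 := by
  have := w.ac
  rcases switch_cases h w a c with h | h | h | h
  · omega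
  · omega
  · exact h.2.2.2
  · exact absurd rfl h.2.1

lemma switch_be (h : Enc0 d L q) (w : Walk6 L x y a b c e) :
    switch L x y a b c e b e = 1 := by
  have := w.be
  rcases switch_cases h w b e with h | h | h | h
  · omega
  · omega
  · exact h.2.2.2
  · exact absurd rfl h.2.2.1

end

/-! ### Double counting -/

/-- A fixed choice of a vertex joined to `x` by label `1` (and `x` if there is none). -/
def nb (L : Matrix (Fin n) (Fin n) ℤ) (x : Fin n) : Fin n :=
  if h : ∃ a, L x a = 1 then h.choose else x

lemma nb_spec {d : Fin n → ℕ} {L : Matrix (Fin n) (Fin n) ℤ} {q : ℕ}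
    (h : Enc0 d L q) (hd : ∀ v, 1 ≤ d v) (x : Fin n) : L x (nb L x) = 1 := by
  have hex : ∃ a, L x a = 1 := by
    have h1 := h.lab_one_card x
    have h2 := hd x
    obtain ⟨a, ha⟩ := Finset.card_pos.1 (by omega : 0 < (lab L 1 x).card)
    exact ⟨a, (Finset.mem_filter.1 ha).2⟩
  rw [nb, dif_pos hex]
  exact hex.choose_spec

lemma Cset_finite (d : Fin n → ℕ) (Z : SimpleGraph (Fin n)) (p q : ℕ) :
    (Cset d Z p q).Finite := by
  have hf : (Set.pi Set.univ fun _ : Fin n => Set.pi Set.univ fun _ : Fin n =>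
      ({-1, 0, 1, 2} : Set ℤ)).Finite :=
    Set.Finite.pi fun _ => Set.Finite.pi fun _ => Set.toFinite _
  refine hf.subset ?_
  intro L hL i _ j _
  simpa using hL.1.1.1.2.2.1 i j

/-- The ordered pairs adjacent in `Z`. -/
def zPairs (Z : SimpleGraph (Fin n)) : Finset (Fin n × Fin n) :=
  Finset.univ.filter fun p => Z.Adj p.1 p.2

lemma card_zPairs {d : Fin n → ℕ} {Z : SimpleGraph (Fin n)} (hZ : Z ∈ Omega d) :
    (zPairs Z).card = M d := by
  rw [zPairs, Finset.card_filter, Fintype.sum_prod_type, M]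
  refine Finset.sum_congr rfl fun x _ => ?_
  rw [← hZ x, Set.ncard_eq_toFinset_card', ← Finset.card_filter]
  congr 1
  ext y
  simp

lemma zAdj_of_neg {L : Matrix (Fin n) (Fin n) ℤ} {Z : SimpleGraph (Fin n)}
    (h : ConsistentWith L Z) {x y : Fin n} (hxy : L x y = -1) : Z.Adj x y := by
  have := h x y
  by_contra hn
  rw [adjMat, if_neg hn] at this
  omega

lemma walk_of_choices {d : Fin n → ℕ} {L : Matrix (Fin n) (Fin n) ℤ} {q : ℕ}
    (h : Enc0 d L q) (hd : ∀ v, 1 ≤ d v) {p r : Fin n × Fin n}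
    (hp : p ∈ labPairs L (-1)) (hr : r ∈ choices L (nb L p.1) (nb L p.2)) :
    Walk6 L p.1 p.2 (nb L p.1) (nb L p.2) r.1 r.2 := by
  simp only [choices, labPairs, blocked, Finset.mem_filter, Finset.mem_univ, true_and,
    not_or, not_not] at hp hr
  obtain ⟨h1, ⟨h2, h3⟩, h4, h5⟩ := hr
  exact ⟨hp, nb_spec h hd _, nb_spec h hd _, h1, h3, h5, Ne.symm h2, Ne.symm h4⟩

/-- Double counting of the switches from `C(0,q)` to `C(0,q-1)`, for any lower bound `K` on the
number of switches out of a given encoding at a given oriented (−1)-defect edge. -/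
lemma double_count {d : Fin n → ℕ} {Z : SimpleGraph (Fin n)} (hZ : Z ∈ Omega d)
    (hd : ∀ v, 1 ≤ d v) (q K : ℕ)
    (hK : ∀ L ∈ Cset d Z 0 q, ∀ a b, K ≤ (choices L a b).card) :
    (Cset d Z 0 q).ncard * (2 * q * K) ≤
      (Cset d Z 0 (q - 1)).ncard * (M d * (M d + 2 * (q - 1)) ^ 2) := by
  set S := (Cset_finite d Z 0 q).toFinset with hS
  set S' := (Cset_finite d Z 0 (q - 1)).toFinset with hS'
  have memS : ∀ {L}, L ∈ S → L ∈ Cset d Z 0 q := fun h => (Set.Finite.mem_toFinset _).1 h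
  have memS' : ∀ {L}, L ∈ S' → L ∈ Cset d Z 0 (q - 1) := fun h => (Set.Finite.mem_toFinset _).1 h
  rw [Set.ncard_eq_toFinset_card _ (Cset_finite d Z 0 q),
    Set.ncard_eq_toFinset_card _ (Cset_finite d Z 0 (q - 1)), ← hS, ← hS']
  let T := S.sigma fun L => (labPairs L (-1)).sigma fun p => choices L (nb L p.1) (nb L p.2)
  let T' := S'.sigma fun L => zPairs Z ×ˢ (labPairs L 1 ×ˢ labPairs L 1)
  have hT : S.card * (2 * q * K) ≤ T.card := by
    rw [Finset.card_sigma, ← smul_eq_mul]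
    refine Finset.card_nsmul_le_sum _ _ _ fun L hL => ?_
    rw [Finset.card_sigma, ← (Cset_enc0 (memS hL)).card_pairs_neg, ← smul_eq_mul]
    exact Finset.card_nsmul_le_sum _ _ _ fun p _ => hK L (memS hL) _ _
  have hT' : T'.card ≤ S'.card * (M d * (M d + 2 * (q - 1)) ^ 2) := by
    rw [Finset.card_sigma, ← smul_eq_mul]
    refine Finset.sum_le_card_nsmul _ _ _ fun L hL => ?_
    rw [Finset.card_product, Finset.card_product, card_zPairs hZ,
      (Cset_enc0 (memS' hL)).card_pairs_one, sq]
  refine hT.trans (le_trans ?_ hT')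
  refine Finset.card_le_card_of_injOn
    (fun t => ⟨switch t.1 t.2.1.1 t.2.1.2 (nb t.1 t.2.1.1) (nb t.1 t.2.1.2) t.2.2.1 t.2.2.2,
      (t.2.1, ((nb t.1 t.2.1.1, t.2.2.1), (nb t.1 t.2.1.2, t.2.2.2)))⟩) ?_ ?_
  · rintro ⟨L, p, r⟩ ht
    simp only [T, Finset.coe_sigma, Set.mem_sigma_iff, Finset.mem_coe] at ht
    obtain ⟨hL, hp, hr⟩ := ht
    have hL := memS hL
    have h := Cset_enc0 hL
    have w := walk_of_choices h hd hp hr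
    simp only [T', Finset.mem_coe, Finset.mem_sigma, Finset.mem_product]
    refine ⟨(Set.Finite.mem_toFinset _).2 (switch_mem hL w), ?_, ?_, ?_⟩
    · exact Finset.mem_filter.2 ⟨Finset.mem_univ _, zAdj_of_neg hL.2.1 w.xy⟩
    · exact Finset.mem_filter.2 ⟨Finset.mem_univ _, switch_ac h w⟩
    · exact Finset.mem_filter.2 ⟨Finset.mem_univ _, switch_be h w⟩
  · rintro ⟨L, p, r⟩ - ⟨L₂, p₂, r₂⟩ - heq
    simp only [Sigma.mk.injEq, heq_eq_eq, Prod.mk.injEq] at heq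
    obtain ⟨h1, h2, ⟨h3, h4⟩, h5, h6⟩ := heq
    subst h2
    obtain ⟨c, e⟩ := r
    obtain ⟨c₂, e₂⟩ := r₂
    simp only at h4 h6 h1
    subst h4 h6
    rw [h3, h5] at h1
    have : L = L₂ := by
      funext u v
      have := congrFun (congrFun h1 u) v
      simpa [switch] using this
    rw [this]

/-- The numerical estimate: `M ≥ 9Δ²` and `Δ ≥ 3` leave at least `M / (2q)` choices. -/
lemma choices_bound (m D q : ℕ) (hD : 3 ≤ D) (hm : 9 * D ^ 2 ≤ m)
    (hq : q = 1 ∨ q = 2 ∨ q = 3) (K : ℕ)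
    (hK : m + 2 * q = K + 2 * ((1 + D + 2 * q) * D + 2 * q)) : m ≤ 2 * q * K := by
  rcases hq with rfl | rfl | rfl <;> nlinarith

/-- Phase 3 bound: for `q ∈ {1, 2, 3}`, `|C(0,q)| ≤ (9/8) M² |C(0, q−1)|`. -/
theorem phase3_bound
    (d : Fin n → ℕ) (hgraphical : (Omega d).Nonempty)
    (hdmin : ∀ v, 1 ≤ d v)
    (hdmax3 : 3 ≤ dmax d)
    (hdmaxM : (dmax d : ℝ) ≤ (1 / 3) * Real.sqrt (M d))
    (Z : SimpleGraph (Fin n)) (hZ : Z ∈ Omega d) :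
    ∀ q : ℕ, (q = 1 ∨ q = 2 ∨ q = 3) →
      ((Cset d Z 0 q).ncard : ℚ) ≤
        (9 / 8 : ℚ) * (M d : ℚ) ^ 2 * ((Cset d Z 0 (q - 1)).ncard : ℚ) := by
  intro q hq
  set D := dmax d with hD
  have hm : 9 * D ^ 2 ≤ M d := by
    have h0 : (0 : ℝ) ≤ M d := Nat.cast_nonneg _
    have h1 := Real.sq_sqrt h0
    have h2 : (0 : ℝ) ≤ D := Nat.cast_nonneg _
    have h3 : (9 * D ^ 2 : ℝ) ≤ M d := by nlinarith [Real.sqrt_nonneg (M d : ℝ)]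
    exact_mod_cast h3
  have h81 : 81 ≤ M d := by nlinarith
  obtain ⟨K, hK⟩ : ∃ K, M d + 2 * q = K + 2 * ((1 + D + 2 * q) * D + 2 * q) := by
    refine ⟨M d + 2 * q - 2 * ((1 + D + 2 * q) * D + 2 * q), (Nat.sub_add_cancel ?_).symm⟩
    rcases hq with rfl | rfl | rfl <;> nlinarith
  have hmK := choices_bound (M d) D q hdmax3 hm hq K hK
  have hdc := double_count hZ hdmin q K fun L hL a b => by
    have := (Cset_enc0 hL).card_choices a b
    rw [← hD] at this
    omega
  set A := (Cset d Z 0 q).ncard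
  set B := (Cset d Z 0 (q - 1)).ncard
  have h1 : A * M d ≤ B * (M d * (M d + 2 * (q - 1)) ^ 2) :=
    (Nat.mul_le_mul_left A hmK).trans hdc
  have h2 : A ≤ B * (M d + 2 * (q - 1)) ^ 2 := by
    have hpos : 0 < M d := by omega
    refine Nat.le_of_mul_le_mul_right (?_ : _ * M d ≤ _ * M d) hpos
    calc A * M d ≤ _ := h1
      _ = _ := by ring
  -- `(1 + 4/81)² ≤ 9/8` absorbs the 1-labelled pairs in excess of `M`.
  have h3 : 8 * (M d + 2 * (q - 1)) ^ 2 ≤ 9 * M d ^ 2 := by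
    have : M d + 2 * (q - 1) ≤ M d + 4 := by omega
    nlinarith [Nat.pow_le_pow_left this 2]
  have h4 : 8 * A ≤ 9 * M d ^ 2 * B := by
    calc 8 * A ≤ 8 * (B * (M d + 2 * (q - 1)) ^ 2) := Nat.mul_le_mul_left 8 h2
      _ = 8 * (M d + 2 * (q - 1)) ^ 2 * B := by ring
      _ ≤ _ := Nat.mul_le_mul_right B h3
  have h5 : (8 * A : ℚ) ≤ 9 * (M d : ℚ) ^ 2 * B := by exact_mod_cast h4
  linarith

end SwitchChain
end
end

section
/- Suppose that ᵈ is a switch-irreducible digraphical directed degree sequence, and that G ∈ Ω(ᵈ) contains a set of three vertices U = {v_0, v_1, v_2} such that the induced digraph G[U] is a directed 3-cycle. Then there exists a useful neighbour or a useful arc for this 3-cycle. -/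
/-!
Suppose there is neither a useful neighbour nor a useful arc for the 3-cycle on `U`. Every vertex
then gets a row level `r` (`2` if it sends arcs to all of `U`, `1` if it lies in `U`, `0` if it
sends no arc to `U`) and, symmetrically, a column level `c` for the arcs received from `U`.
The hypothesis says exactly that every arc `(x, y)` has `2 ≤ r x + c y` and every non-arc
`(x, y)` with `x ≠ y` has `r x + c y ≤ 2`.

A switch on `(i, j), (k, l)` trades two arcs for two non-arcs with the same total level, so all four
pairs have level exactly `2`. Hence the level conditions survive the switch (`DSwitch.levelInv`),
and moreover `r i = r k` and `c j = c l`. A switch that removes an arc inside `U` would thus have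
its four distinct vertices in `U`, which has only three elements. So the arc `v0 → v1` is never
removed, and the digraph with the 3-cycle reversed (`reverseTriangle`), which has the same degrees,
is not reachable from `A`. This contradicts switch-irreducibility.
-/

open scoped Classical

noncomputable section

namespace DirectedSwitchChain

variable {n : ℕ}

/-- `Omega dm dp` is the set of simple directed graphs on `[n] = Fin n` (arc sets,
with no loops) in which vertex `j` has in-degree `dm j` and out-degree `dp j`. -/
def Omega (dm dp : Fin n → ℕ) : Set (Set (Fin n × Fin n)) :=
  {A | (∀ a ∈ A, a.1 ≠ a.2) ∧
       (∀ j, {w | (j, w) ∈ A}.ncard = dp j) ∧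
       (∀ j, {w | (w, j) ∈ A}.ncard = dm j)}

/-- `A'` is obtained from `A` by a single directed switch. -/
def DSwitch (A A' : Set (Fin n × Fin n)) : Prop :=
  ∃ i j k l : Fin n,
    i ≠ j ∧ i ≠ k ∧ i ≠ l ∧ j ≠ k ∧ j ≠ l ∧ k ≠ l ∧
    (i, j) ∈ A ∧ (k, l) ∈ A ∧ (i, l) ∉ A ∧ (k, j) ∉ A ∧
    A' = (A \ {(i, j), (k, l)}) ∪ {(i, l), (k, j)}

/-- `(dm, dp)` is switch-irreducible. -/
def SwitchIrreducible (dm dp : Fin n → ℕ) : Prop :=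
  ∀ A ∈ Omega dm dp, ∀ A' ∈ Omega dm dp, Relation.ReflTransGen DSwitch A A'

/-- `U⁰`: vertices outside `U` with no arcs to or from `U`. -/
def U0 (A : Set (Fin n × Fin n)) (U : Set (Fin n)) : Set (Fin n) :=
  {x | x ∉ U ∧ ∀ u ∈ U, (x, u) ∉ A ∧ (u, x) ∉ A}

/-- `U⁻`: vertices outside `U` with all arcs to `U` present and none from `U`. -/
def Uminus (A : Set (Fin n × Fin n)) (U : Set (Fin n)) : Set (Fin n) :=
  {x | x ∉ U ∧ (∀ u ∈ U, (x, u) ∈ A) ∧ ∀ u ∈ U, (u, x) ∉ A}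

/-- `U⁺`: vertices outside `U` with no arcs to `U` and all arcs from `U` present. -/
def Uplus (A : Set (Fin n × Fin n)) (U : Set (Fin n)) : Set (Fin n) :=
  {x | x ∉ U ∧ (∀ u ∈ U, (x, u) ∉ A) ∧ ∀ u ∈ U, (u, x) ∈ A}

/-- `U^±`: vertices outside `U` with all arcs to and from `U` present. -/
def Upm (A : Set (Fin n × Fin n)) (U : Set (Fin n)) : Set (Fin n) :=
  {x | x ∉ U ∧ ∀ u ∈ U, (x, u) ∈ A ∧ (u, x) ∈ A}

/-- The induced subdigraph of `A` on `{v0, v1, v2}` is the directed 3-cycle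
`v0 → v1 → v2 → v0`. -/
def IsTriangle (A : Set (Fin n × Fin n)) (v0 v1 v2 : Fin n) : Prop :=
  v0 ≠ v1 ∧ v0 ≠ v2 ∧ v1 ≠ v2 ∧
  {p | p ∈ A ∧ p.1 ∈ ({v0, v1, v2} : Set (Fin n)) ∧ p.2 ∈ ({v0, v1, v2} : Set (Fin n))}
    = ({(v0, v1), (v1, v2), (v2, v0)} : Set (Fin n × Fin n))

/-- `x` is a useful neighbour for the directed 3-cycle on `U`. -/
def UsefulNeighbour (A : Set (Fin n × Fin n)) (U : Set (Fin n)) (x : Fin n) : Prop :=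
  x ∉ U ∧ x ∉ U0 A U ∪ Uminus A U ∪ Uplus A U ∪ Upm A U

/-- `(x, y)` is a useful arc for the directed 3-cycle on `U`. -/
def UsefulArc (A : Set (Fin n × Fin n)) (U : Set (Fin n)) (x y : Fin n) : Prop :=
  x ≠ y ∧
  (((x, y) ∈ A ∧ x ∈ U0 A U ∪ Uplus A U ∧ y ∈ U0 A U ∪ Uminus A U) ∨
   ((x, y) ∉ A ∧ x ∈ Uminus A U ∪ Upm A U ∧ y ∈ Uplus A U ∪ Upm A U))

/-- The level invariant of the module comment, together with the presence of the arc `(a, b)`. -/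
def LevelInv (r c : Fin n → ℕ) (a b : Fin n) (B : Set (Fin n × Fin n)) : Prop :=
  (∀ x y, (x, y) ∈ B → 2 ≤ r x + c y) ∧
  (∀ x y, x ≠ y → (x, y) ∉ B → r x + c y ≤ 2) ∧
  (a, b) ∈ B

/-- A switch preserves the level invariant when, for both `r` and `c`, the vertices of level `1`
are exactly `v0`, `v1`, `v2`. -/
theorem DSwitch.levelInv {r c : Fin n → ℕ} {v0 v1 v2 : Fin n}
    (hr : ∀ x, r x = 1 ↔ x = v0 ∨ x = v1 ∨ x = v2)
    (hc : ∀ x, c x = 1 ↔ x = v0 ∨ x = v1 ∨ x = v2)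
    {B B' : Set (Fin n × Fin n)} (hB : LevelInv r c v0 v1 B) (h : DSwitch B B') :
    LevelInv r c v0 v1 B' := by
  obtain ⟨i, j, k, l, hij, hik, hil, hjk, hjl, hkl, h1, h2, h3, h4, rfl⟩ := h
  obtain ⟨ha, hn, hv⟩ := hB
  have e1 := ha i j h1
  have e2 := ha k l h2
  have e3 := hn i l hil h3
  have e4 := hn k j hjk.symm h4
  refine ⟨?_, ?_, ?_⟩
  · intro x y hxy
    simp only [Set.mem_union, Set.mem_sdiff, Set.mem_insert_iff, Set.mem_singleton_iff,
      Prod.mk.injEq] at hxy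
    rcases hxy with ⟨hxy, -⟩ | ⟨rfl, rfl⟩ | ⟨rfl, rfl⟩
    · exact ha x y hxy
    · omega
    · omega
  · intro x y hne hxy
    by_cases hxB : (x, y) ∈ B
    · simp only [Set.mem_union, Set.mem_sdiff, Set.mem_insert_iff, Set.mem_singleton_iff,
        Prod.mk.injEq, not_or, not_and] at hxy
      have hx := hxy.1 hxB
      by_cases hx1 : x = i ∧ y = j
      · obtain ⟨rfl, rfl⟩ := hx1
        omega
      · have hx2 : x = k ∧ y = l := by tauto
        obtain ⟨rfl, rfl⟩ := hx2
        omega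
    · exact hn x y hne hxB
  · left
    refine ⟨hv, ?_⟩
    intro hmem
    have hr0 : r v0 = 1 := (hr v0).2 (Or.inl rfl)
    have hc1 : c v1 = 1 := (hc v1).2 (Or.inr (Or.inl rfl))
    have hlev : r i = 1 ∧ c j = 1 ∧ r k = 1 ∧ c l = 1 := by
      simp only [Set.mem_insert_iff, Set.mem_singleton_iff, Prod.mk.injEq] at hmem
      rcases hmem with ⟨rfl, rfl⟩ | ⟨rfl, rfl⟩ <;> omega
    obtain ⟨hi, hj, hk, hl⟩ := hlev
    rw [hr] at hi hk
    rw [hc] at hj hl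
    -- four distinct vertices cannot lie in `{v0, v1, v2}`
    grind

/-- The arc set `A` with the 3-cycle `v0 → v1 → v2 → v0` replaced by its reversal. -/
def reverseTriangle (A : Set (Fin n × Fin n)) (v0 v1 v2 : Fin n) : Set (Fin n × Fin n) :=
  (A \ {(v0, v1), (v1, v2), (v2, v0)}) ∪ {(v1, v0), (v2, v1), (v0, v2)}

/-- Membership in an induced 3-cycle, arc by arc. -/
theorem IsTriangle.arcs {A : Set (Fin n × Fin n)} {v0 v1 v2 : Fin n}
    (h : IsTriangle A v0 v1 v2) :
    (v0, v1) ∈ A ∧ (v1, v2) ∈ A ∧ (v2, v0) ∈ A ∧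
      (v1, v0) ∉ A ∧ (v2, v1) ∉ A ∧ (v0, v2) ∉ A := by
  obtain ⟨h01, h02, h12, hE⟩ := h
  have key : ∀ x y, (((x, y) ∈ A ∧ (x = v0 ∨ x = v1 ∨ x = v2) ∧ (y = v0 ∨ y = v1 ∨ y = v2)) ↔
      ((x = v0 ∧ y = v1) ∨ (x = v1 ∧ y = v2) ∨ (x = v2 ∧ y = v0))) := by
    intro x y
    have := Set.ext_iff.1 hE (x, y)
    simp only [Set.mem_ofPred_eq, Set.mem_insert_iff, Set.mem_singleton_iff,
      Prod.mk.injEq] at this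
    exact this
  have k1 := key v0 v1
  have k2 := key v1 v2
  have k3 := key v2 v0
  have k4 := key v1 v0
  have k5 := key v2 v1
  have k6 := key v0 v2
  grind

theorem reverseTriangle_mem_Omega {dm dp : Fin n → ℕ} {A : Set (Fin n × Fin n)}
    (hA : A ∈ Omega dm dp) {v0 v1 v2 : Fin n} (htri : IsTriangle A v0 v1 v2) :
    reverseTriangle A v0 v1 v2 ∈ Omega dm dp := by
  obtain ⟨a01, a12, a20, a10, a21, a02⟩ := htri.arcs
  obtain ⟨h01, h02, h12, -⟩ := htri
  obtain ⟨hl, ho, hi⟩ := hA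
  have mem : ∀ x y, (x, y) ∈ reverseTriangle A v0 v1 v2 ↔
      ((x, y) ∈ A ∧ ¬((x = v0 ∧ y = v1) ∨ (x = v1 ∧ y = v2) ∨ (x = v2 ∧ y = v0))) ∨
        ((x = v1 ∧ y = v0) ∨ (x = v2 ∧ y = v1) ∨ (x = v0 ∧ y = v2)) := by
    intro x y
    simp only [reverseTriangle, Set.mem_union, Set.mem_sdiff, Set.mem_insert_iff,
      Set.mem_singleton_iff, Prod.mk.injEq]
  refine ⟨?_, ?_, ?_⟩
  · rintro ⟨x, y⟩ hxy
    rw [mem] at hxy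
    rcases hxy with ⟨hxy, -⟩ | hxy
    · exact hl _ hxy
    · grind
  -- at each vertex of the triangle exactly one neighbour is exchanged, elsewhere none
  · intro j
    rw [← ho j]
    have exch : ∀ a b : Fin n, (j, a) ∉ A → (j, b) ∈ A →
        (∀ w, (j, w) ∈ reverseTriangle A v0 v1 v2 ↔ w = a ∨ ((j, w) ∈ A ∧ w ≠ b)) →
        {w | (j, w) ∈ reverseTriangle A v0 v1 v2}.ncard = {w | (j, w) ∈ A}.ncard := by
      intro a b ha hb hab
      rw [← Set.ncard_exchange (s := {w | (j, w) ∈ A}) ha hb]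
      congr 1
      ext w
      simp [hab]
    by_cases j0 : j = v0
    · subst j0
      exact exch v2 v1 a02 a01 (by grind)
    by_cases j1 : j = v1
    · subst j1
      exact exch v0 v2 a10 a12 (by grind)
    by_cases j2 : j = v2
    · subst j2
      exact exch v1 v0 a21 a20 (by grind)
    congr 1
    ext w
    simp [mem, j0, j1, j2]
  · intro j
    rw [← hi j]
    have exch : ∀ a b : Fin n, (a, j) ∉ A → (b, j) ∈ A →
        (∀ w, (w, j) ∈ reverseTriangle A v0 v1 v2 ↔ w = a ∨ ((w, j) ∈ A ∧ w ≠ b)) →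
        {w | (w, j) ∈ reverseTriangle A v0 v1 v2}.ncard = {w | (w, j) ∈ A}.ncard := by
      intro a b ha hb hab
      rw [← Set.ncard_exchange (s := {w | (w, j) ∈ A}) ha hb]
      congr 1
      ext w
      simp [hab]
    by_cases j0 : j = v0
    · subst j0
      exact exch v1 v2 a10 a20 (by grind)
    by_cases j1 : j = v1
    · subst j1
      exact exch v2 v0 a21 a01 (by grind)
    by_cases j2 : j = v2
    · subst j2
      exact exch v0 v1 a02 a12 (by grind)
    congr 1
    ext w
    simp [mem, j0, j1, j2]

/-- Lemma 3.2: for a switch-irreducible degree sequence, every directed 3-cycle in a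
digraph of `Omega dm dp` has a useful neighbour or a useful arc. -/
theorem triangle_has_useful_neighbour_or_arc
    (dm dp : Fin n → ℕ)
    (hdigraphical : (Omega dm dp).Nonempty)
    (hirr : SwitchIrreducible dm dp)
    (A : Set (Fin n × Fin n)) (hA : A ∈ Omega dm dp)
    (v0 v1 v2 : Fin n) (htri : IsTriangle A v0 v1 v2) :
    (∃ x, UsefulNeighbour A {v0, v1, v2} x) ∨
    (∃ x y, UsefulArc A {v0, v1, v2} x y) := by
  by_contra hcon
  push Not at hcon
  obtain ⟨hN, hU⟩ := hcon
  obtain ⟨a01, a12, a20, a10, a21, a02⟩ := htri.arcs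
  have hrev := reverseTriangle_mem_Omega hA htri
  obtain ⟨h01, h02, h12, -⟩ := htri
  have hl := hA.1
  have hN' : ∀ x, ¬(x = v0 ∨ x = v1 ∨ x = v2) →
      ((x, v1) ∈ A ↔ (x, v0) ∈ A) ∧ ((x, v2) ∈ A ↔ (x, v0) ∈ A) ∧
      ((v1, x) ∈ A ↔ (v0, x) ∈ A) ∧ ((v2, x) ∈ A ↔ (v0, x) ∈ A) := by
    intro x hx
    have := hN x
    simp only [UsefulNeighbour, U0, Uminus, Uplus, Upm, Set.mem_union, Set.mem_ofPred_eq,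
      Set.mem_insert_iff, Set.mem_singleton_iff, forall_eq_or_imp, forall_eq] at this
    tauto
  have hU' : ∀ x y, x ≠ y → ¬(x = v0 ∨ x = v1 ∨ x = v2) → ¬(y = v0 ∨ y = v1 ∨ y = v2) →
      ((x, v0) ∉ A → (v0, y) ∉ A → (x, y) ∉ A) ∧ ((x, v0) ∈ A → (v0, y) ∈ A → (x, y) ∈ A) := by
    intro x y hxy hx hy
    have h := hU x y
    obtain ⟨p1, p2, p3, p4⟩ := hN' x hx
    obtain ⟨q1, q2, q3, q4⟩ := hN' y hy
    simp only [UsefulArc, U0, Uminus, Uplus, Upm, Set.mem_union, Set.mem_ofPred_eq,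
      Set.mem_insert_iff, Set.mem_singleton_iff, forall_eq_or_imp, forall_eq,
      p1, p2, p3, p4, q1, q2, q3, q4, hx, hy, and_self, not_false_eq_true, true_and] at h
    clear p1 p2 p3 p4 q1 q2 q3 q4 hN hU hN' hA hrev hirr
    by_cases e1 : (x, v0) ∈ A <;> by_cases e2 : (v0, y) ∈ A <;> by_cases e3 : (x, y) ∈ A <;>
      simp only [e1, e2, e3] at h ⊢ <;> tauto
  let r : Fin n → ℕ := fun x =>
    if x = v0 ∨ x = v1 ∨ x = v2 then 1 else if (x, v0) ∈ A then 2 else 0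
  let c : Fin n → ℕ := fun y =>
    if y = v0 ∨ y = v1 ∨ y = v2 then 1 else if (v0, y) ∈ A then 2 else 0
  have hr : ∀ x, r x = 1 ↔ x = v0 ∨ x = v1 ∨ x = v2 := by
    intro x
    by_cases hx : x = v0 ∨ x = v1 ∨ x = v2
    · exact iff_of_true (if_pos hx) hx
    · refine iff_of_false ?_ hx
      simp only [r, if_neg hx]
      split_ifs <;> decide
  have hc : ∀ x, c x = 1 ↔ x = v0 ∨ x = v1 ∨ x = v2 := by
    intro x
    by_cases hx : x = v0 ∨ x = v1 ∨ x = v2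
    · exact iff_of_true (if_pos hx) hx
    · refine iff_of_false ?_ hx
      simp only [c, if_neg hx]
      split_ifs <;> decide
  have hinit : LevelInv r c v0 v1 A := by
    refine ⟨?_, ?_, a01⟩
    · intro x y hxy
      have hne : x ≠ y := hl _ hxy
      have h1 := hN' x
      have h2 := hN' y
      have h3 := hU' x y hne
      simp only [r, c]
      split_ifs <;> grind
    · intro x y hne hxy
      have h1 := hN' x
      have h2 := hN' y
      have h3 := hU' x y hne
      simp only [r, c]
      split_ifs <;> grind
  have hfin : LevelInv r c v0 v1 (reverseTriangle A v0 v1 v2) := by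
    have hreach := hirr A hA _ hrev
    generalize reverseTriangle A v0 v1 v2 = B at hreach
    induction hreach with
    | refl => exact hinit
    | tail _ hs ih => exact DSwitch.levelInv hr hc ih hs
  have hbad := hfin.2.2
  simp only [reverseTriangle, Set.mem_union, Set.mem_sdiff, Set.mem_insert_iff,
    Set.mem_singleton_iff, Prod.mk.injEq] at hbad
  grind

end DirectedSwitchChain
end
end

section
/- Let ᵈ be a digraphical directed degree sequence. The directed switch chain M(ᵈ) fails to be irreducible if and only if for every G ∈ Ω(ᵈ) there exists a vertex subset U = {v_0, v_1, v_2} such that G[U] is a directed 3-cycle, the four sets U^0, U^-, U^+, U^± form a partition of [n]\U, and in addition: (U1) no arc from a vertex of U^0 ∪ U^+ to a vertex of U^0 ∪ U^- is present in G, and (U2) every ordered pair (x,y) of distinct vertices with x ∈ U^- ∪ U^± and y ∈ U^+ ∪ U^± is an arc of G. -/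
/-!
A 3-cycle as in the theorem is called *stuck* (`Stuck`); the proof has three parts.

*Stuck cycles are rigid.* Give a vertex the row weight `1`, `0` or `-1` according to whether it sends
arcs to all of the cycle, lies on it, or sends none to it, and column weights likewise. The total of
row plus column weight over all arcs depends only on the degrees, and the conditions on a stuck cycle
say that it is maximal. Hence all digraphs with the same degrees agree on all pairs of nonzero weight
(`agree_of_weight`, `stuck_agree`). So each of them is stuck at the same three vertices
(`stuck_transfer`), and no switch can touch the cycle (`stuck_invariant`), although reversing it
preserves the degrees (`rev_omega`). This gives non-irreducibility.

*Other 3-cycles can be reversed by switches.* If an outside vertex is joined non-uniformly to the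
cycle, or a pair violates one of the last two conditions, three or four explicit switches reverse the
cycle (`reach_rev`). Complementation and reversal of all arcs commute with switches and reduce this
to two cases (`reach_rev_one`, `reach_rev_arc`).

*Switches and 3-cycle reversals connect everything.* Let `G ≠ H` have the same degrees, and suppose
that no switch of `G` or of `H` decreases the size of their symmetric difference. In the difference
of the adjacency matrices, three corners of alternating sign of a rectangle then force the sign of
the fourth, unless the latter is on the diagonal (`closure_of_no_decrease`). In a row with the fewest
`+1` entries this leaves a single one, and following the signs from there yields a 3-cycle of `G`
whose reversal lies in `H` (`exists_tri`). Reversing it decreases the symmetric difference, so if no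
digraph with these degrees has a stuck cycle, the chain is irreducible (`reach_of_not_stuck`).
-/

open scoped Classical

noncomputable section

namespace DirectedSwitchChain

variable {n : ℕ}

/-! ### Elementary moves -/

/-- The reversal of the arc set `A`: `(x, y)` is an arc of `flip A` iff `(y, x)` is one of `A`. -/
def flip (A : Set (Fin n × Fin n)) : Set (Fin n × Fin n) := {p | (p.2, p.1) ∈ A}

/-- The three vertices are distinct and induce, loops aside, the directed cycle `a → b → c → a`. -/
def Tri (A : Set (Fin n × Fin n)) (a b c : Fin n) : Prop :=
  a ≠ b ∧ a ≠ c ∧ b ≠ c ∧ (a, b) ∈ A ∧ (b, c) ∈ A ∧ (c, a) ∈ A ∧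
    (b, a) ∉ A ∧ (c, b) ∉ A ∧ (a, c) ∉ A

/-- The result of reversing the directed cycle `a → b → c → a` in `A`. -/
def rev (A : Set (Fin n × Fin n)) (a b c : Fin n) : Set (Fin n × Fin n) :=
  (A \ {(a, b), (b, c), (c, a)}) ∪ {(b, a), (c, b), (a, c)}

/-- The result of replacing the arcs `(i, j), (k, l)` by `(i, l), (k, j)`. -/
def sw (A : Set (Fin n × Fin n)) (i j k l : Fin n) : Set (Fin n × Fin n) :=
  (A \ {(i, j), (k, l)}) ∪ {(i, l), (k, j)}

/-- The directed switch chain can move from `A` to `B`. -/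
abbrev Reach (A B : Set (Fin n × Fin n)) : Prop := Relation.ReflTransGen DSwitch A B

lemma mem_flip {A : Set (Fin n × Fin n)} {x y : Fin n} : (x, y) ∈ flip A ↔ (y, x) ∈ A := Iff.rfl

lemma flip_flip (A : Set (Fin n × Fin n)) : flip (flip A) = A := rfl

lemma mem_sw {A : Set (Fin n × Fin n)} {i j k l x y : Fin n} :
    (x, y) ∈ sw A i j k l ↔ ((x, y) ∈ A ∧ ¬ (x = i ∧ y = j) ∧ ¬ (x = k ∧ y = l)) ∨
      (x = i ∧ y = l) ∨ (x = k ∧ y = j) := by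
  simp only [sw, Set.mem_union, Set.mem_sdiff, Set.mem_insert_iff, Set.mem_singleton_iff,
    Prod.mk.injEq, not_or]

lemma mem_rev {A : Set (Fin n × Fin n)} {a b c x y : Fin n} :
    (x, y) ∈ rev A a b c ↔
      ((x, y) ∈ A ∧ ¬ (x = a ∧ y = b) ∧ ¬ (x = b ∧ y = c) ∧ ¬ (x = c ∧ y = a)) ∨
      (x = b ∧ y = a) ∨ (x = c ∧ y = b) ∨ (x = a ∧ y = c) := by
  simp only [rev, Set.mem_union, Set.mem_sdiff, Set.mem_insert_iff, Set.mem_singleton_iff,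
    Prod.mk.injEq, not_or]

lemma dswitch_symm {A B : Set (Fin n × Fin n)} (h : DSwitch A B) : DSwitch B A := by
  obtain ⟨i, j, k, l, h1, h2, h3, h4, h5, h6, m1, m2, m3, m4, rfl⟩ := h
  refine ⟨i, l, k, j, h3, h2, h1, h6.symm, h5.symm, h4.symm, ?_, ?_, ?_, ?_, ?_⟩
  · simp
  · simp
  · simp [h5, h2]
  · simp [h2.symm, h5.symm]
  · ext ⟨x, y⟩
    simp only [Set.mem_union, Set.mem_sdiff, Set.mem_insert_iff, Set.mem_singleton_iff,
      Prod.mk.injEq]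
    grind

lemma reach_symm {A B : Set (Fin n × Fin n)} (h : Reach A B) : Reach B A := by
  induction h with
  | refl => exact .refl
  | tail _ h ih => exact .head (dswitch_symm h) ih

lemma dswitch_compl {A B : Set (Fin n × Fin n)} (h : DSwitch A B) : DSwitch Aᶜ Bᶜ := by
  obtain ⟨i, j, k, l, h1, h2, h3, h4, h5, h6, m1, m2, m3, m4, rfl⟩ := h
  refine ⟨i, l, k, j, h3, h2, h1, h6.symm, h5.symm, h4.symm, m3, m4, by simpa using m1,
    by simpa using m2, ?_⟩
  ext ⟨x, y⟩
  simp only [Set.mem_union, Set.mem_sdiff, Set.mem_insert_iff, Set.mem_singleton_iff,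
    Prod.mk.injEq, Set.mem_compl_iff]
  grind

lemma dswitch_flip {A B : Set (Fin n × Fin n)} (h : DSwitch A B) : DSwitch (flip A) (flip B) := by
  obtain ⟨i, j, k, l, h1, h2, h3, h4, h5, h6, m1, m2, m3, m4, rfl⟩ := h
  refine ⟨j, i, l, k, h1.symm, h5, h4, h3, h2, h6.symm, m1, m2, m4, m3, ?_⟩
  ext ⟨x, y⟩
  simp only [flip, Set.mem_union, Set.mem_sdiff, Set.mem_insert_iff, Set.mem_singleton_iff,
    Prod.mk.injEq, Set.mem_ofPred_eq]
  grind

lemma reach_compl {A B : Set (Fin n × Fin n)} (h : Reach Aᶜ Bᶜ) : Reach A B := by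
  have h' : Reach Aᶜᶜ Bᶜᶜ :=
    Relation.ReflTransGen.lift (p := DSwitch) compl (fun _ _ => dswitch_compl) _ _ h
  simpa using h'

lemma reach_flip {A B : Set (Fin n × Fin n)} (h : Reach (flip A) (flip B)) : Reach A B :=
  Relation.ReflTransGen.lift (p := DSwitch) flip (fun _ _ => dswitch_flip) _ _ h

lemma dswitch_sw {A : Set (Fin n × Fin n)} {i j k l : Fin n}
    (h : i ≠ j ∧ i ≠ k ∧ i ≠ l ∧ j ≠ k ∧ j ≠ l ∧ k ≠ l)
    (hA : (i, j) ∈ A ∧ (k, l) ∈ A ∧ (i, l) ∉ A ∧ (k, j) ∉ A) : DSwitch A (sw A i j k l) :=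
  ⟨i, j, k, l, h.1, h.2.1, h.2.2.1, h.2.2.2.1, h.2.2.2.2.1, h.2.2.2.2.2, hA.1, hA.2.1, hA.2.2.1,
    hA.2.2.2, rfl⟩

lemma Tri.rot {A : Set (Fin n × Fin n)} {a b c : Fin n} (h : Tri A a b c) : Tri A b c a := by
  unfold Tri at *; tauto

lemma Tri.compl {A : Set (Fin n × Fin n)} {a b c : Fin n} (h : Tri A a b c) : Tri Aᶜ a c b := by
  unfold Tri at *; simp only [Set.mem_compl_iff]; tauto

lemma Tri.flip {A : Set (Fin n × Fin n)} {a b c : Fin n} (h : Tri A a b c) :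
    Tri (flip A) a c b := by
  unfold Tri at *; simp only [mem_flip]; tauto

lemma rev_rot (A : Set (Fin n × Fin n)) (a b c : Fin n) : rev A b c a = rev A a b c := by
  ext ⟨x, y⟩; simp only [mem_rev]; tauto

lemma rev_compl {A : Set (Fin n × Fin n)} {a b c : Fin n} (h : Tri A a b c) :
    (rev A a b c)ᶜ = rev Aᶜ a c b := by
  obtain ⟨h1, h2, h3, -⟩ := h
  ext ⟨x, y⟩; simp only [mem_rev, Set.mem_compl_iff]; grind

lemma rev_flip (A : Set (Fin n × Fin n)) (a b c : Fin n) :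
    DirectedSwitchChain.flip (rev A a b c) = rev (DirectedSwitchChain.flip A) a c b := by
  ext ⟨x, y⟩; simp only [mem_rev, mem_flip]; tauto

/-! ### Reversing a 3-cycle by switches -/

/-- A vertex `x` sending exactly one arc into the cycle allows its reversal: three switches, each
between `x` and one vertex of the cycle, move the arc of `x` once around the cycle. -/
lemma reach_rev_one {A : Set (Fin n × Fin n)} {a b c x : Fin n} (h : Tri A a b c)
    (xa : x ≠ a) (xb : x ≠ b) (xc : x ≠ c)
    (ha : (x, a) ∈ A) (hb : (x, b) ∉ A) (hc : (x, c) ∉ A) : Reach A (rev A a b c) := by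
  obtain ⟨h1, h2, h3, m1, m2, m3, m4, m5, m6⟩ := h
  have s1 : DSwitch A (sw A x a b c) := dswitch_sw (by grind) (by grind)
  have s2 : DSwitch (sw A x a b c) (sw (sw A x a b c) x c a b) :=
    dswitch_sw (by grind) (by simp only [mem_sw]; grind)
  have s3 : DSwitch (sw (sw A x a b c) x c a b) (sw (sw (sw A x a b c) x c a b) x b c a) :=
    dswitch_sw (by grind) (by simp only [mem_sw]; grind)
  have e : sw (sw (sw A x a b c) x c a b) x b c a = rev A a b c := by
    ext ⟨y, z⟩; simp only [mem_sw, mem_rev]; grind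
  exact e ▸ ((Relation.ReflTransGen.single s1).tail s2).tail s3

/-- An arc `(x, y)` with no arc from `x` into the cycle and no arc `(a, y)` allows the reversal: a
first switch trades `(x, y), (a, b)` for `(x, b), (a, y)`, two switches move the arc from `x` into
the cycle on to its other vertices, and a fourth one restores `(x, y)`. -/
lemma reach_rev_arc {A : Set (Fin n × Fin n)} {a b c x y : Fin n} (h : Tri A a b c)
    (xa : x ≠ a) (xb : x ≠ b) (xc : x ≠ c) (ya : y ≠ a) (yb : y ≠ b) (yc : y ≠ c) (xy : x ≠ y)
    (hxy : (x, y) ∈ A) (ha : (x, a) ∉ A) (hb : (x, b) ∉ A) (hc : (x, c) ∉ A)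
    (ha' : (a, y) ∉ A) : Reach A (rev A a b c) := by
  obtain ⟨h1, h2, h3, m1, m2, m3, m4, m5, m6⟩ := h
  have s1 : DSwitch A (sw A x y a b) := dswitch_sw (by grind) (by grind)
  generalize hA1 : sw A x y a b = A1 at s1
  have e1 : ∀ u v, (u, v) ∈ A1 ↔ _ := fun u v => hA1 ▸ mem_sw
  have s2 : DSwitch A1 (sw A1 x b c a) := dswitch_sw (by grind) (by simp only [e1]; grind)
  generalize hA2 : sw A1 x b c a = A2 at s2
  have e2 : ∀ u v, (u, v) ∈ A2 ↔ _ := fun u v => hA2 ▸ mem_sw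
  have s3 : DSwitch A2 (sw A2 x a b c) := dswitch_sw (by grind) (by simp only [e2, e1]; grind)
  generalize hA3 : sw A2 x a b c = A3 at s3
  have e3 : ∀ u v, (u, v) ∈ A3 ↔ _ := fun u v => hA3 ▸ mem_sw
  have s4 : DSwitch A3 (sw A3 x c a y) := dswitch_sw (by grind) (by simp only [e3, e2, e1]; grind)
  have e : sw A3 x c a y = rev A a b c := by
    ext ⟨u, v⟩; simp only [mem_sw, e3, e2, e1, mem_rev]; grind
  exact e ▸ (((Relation.ReflTransGen.single s1).tail s2).tail s3).tail s4

lemma reach_rev_partial {A : Set (Fin n × Fin n)} {a b c x : Fin n} (h : Tri A a b c)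
    (xa : x ≠ a) (xb : x ≠ b) (xc : x ≠ c)
    (hp : ¬ (((x, a) ∈ A ↔ (x, b) ∈ A) ∧ ((x, a) ∈ A ↔ (x, c) ∈ A))) :
    Reach A (rev A a b c) := by
  have r1 : rev A b c a = rev A a b c := rev_rot A a b c
  have r2 : rev A c a b = rev A a b c := (rev_rot A b c a).trans r1
  have k1 := rev_compl h
  have k2 : (rev A a b c)ᶜ = rev Aᶜ c b a := k1.trans (rev_rot _ _ _ _).symm
  have k3 : (rev A a b c)ᶜ = rev Aᶜ b a c := k2.trans (rev_rot _ _ _ _).symm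
  by_cases ha : (x, a) ∈ A <;> by_cases hb : (x, b) ∈ A <;> by_cases hc : (x, c) ∈ A
  · tauto
  · exact reach_compl (k2 ▸ reach_rev_one h.compl.rot xc xb xa hc (by simpa) (by simpa))
  · exact reach_compl (k3 ▸ reach_rev_one h.compl.rot.rot xb xa xc hb (by simpa) (by simpa))
  · exact reach_rev_one h xa xb xc ha hb hc
  · exact reach_compl (k1 ▸ reach_rev_one h.compl xa xc xb ha (by simpa) (by simpa))
  · exact r1 ▸ reach_rev_one h.rot xb xc xa hb hc ha
  · exact r2 ▸ reach_rev_one h.rot.rot xc xa xb hc ha hb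
  · tauto

/-- A pointwise form of the obstruction in the theorem. Since each outside vertex is joined
uniformly to and from the cycle, its class is read off from its two pairs with `a`. -/
def Stuck (A : Set (Fin n × Fin n)) (a b c : Fin n) : Prop :=
  Tri A a b c ∧
  (∀ x, x ≠ a → x ≠ b → x ≠ c → ((x, a) ∈ A ↔ (x, b) ∈ A) ∧ ((x, a) ∈ A ↔ (x, c) ∈ A)) ∧
  (∀ x, x ≠ a → x ≠ b → x ≠ c → ((a, x) ∈ A ↔ (b, x) ∈ A) ∧ ((a, x) ∈ A ↔ (c, x) ∈ A)) ∧
  (∀ x y, x ≠ a → x ≠ b → x ≠ c → y ≠ a → y ≠ b → y ≠ c → x ≠ y →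
    ((x, a) ∉ A → (a, y) ∉ A → (x, y) ∉ A) ∧ ((x, a) ∈ A → (a, y) ∈ A → (x, y) ∈ A))

/-- A 3-cycle that is not stuck can be reversed by switches. -/
lemma reach_rev {A : Set (Fin n × Fin n)} {a b c : Fin n} (h : Tri A a b c)
    (hs : ¬ Stuck A a b c) : Reach A (rev A a b c) := by
  by_contra hr
  have hout : ∀ x, x ≠ a → x ≠ b → x ≠ c →
      ((x, a) ∈ A ↔ (x, b) ∈ A) ∧ ((x, a) ∈ A ↔ (x, c) ∈ A) := by
    intro x xa xb xc
    by_contra hp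
    exact hr (reach_rev_partial h xa xb xc hp)
  have hin : ∀ x, x ≠ a → x ≠ b → x ≠ c →
      ((a, x) ∈ A ↔ (b, x) ∈ A) ∧ ((a, x) ∈ A ↔ (c, x) ∈ A) := by
    intro x xa xb xc
    by_contra hp
    refine hr (reach_flip ?_)
    rw [rev_flip]
    exact reach_rev_partial h.flip xa xc xb (by simp only [mem_flip]; tauto)
  refine hs ⟨h, hout, hin, ?_⟩
  intro x y xa xb xc ya yb yc xy
  obtain ⟨o1, o2⟩ := hout x xa xb xc
  constructor
  · intro h1 h2 h3
    exact hr (reach_rev_arc h xa xb xc ya yb yc xy h3 h1 (by tauto) (by tauto) h2)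
  · intro h1 h2
    by_contra h3
    refine hr (reach_compl ?_)
    rw [rev_compl h]
    exact reach_rev_arc h.compl xa xc xb ya yc yb xy h3 (by simpa) (by simp; tauto)
      (by simp; tauto) (by simpa)

/-! ### Moves preserve the degree sequence -/

lemma omega_flip {dm dp : Fin n → ℕ} {A : Set (Fin n × Fin n)} (h : A ∈ Omega dm dp) :
    flip A ∈ Omega dp dm :=
  ⟨fun _ ha => (h.1 _ ha).symm, h.2.2, h.2.1⟩

/-- A set of arcs has the degrees of `A` if every row and column of its adjacency matrix is either
that of `A` or arises from it by exchanging a one with a zero. -/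
lemma omega_of_exchange {dm dp : Fin n → ℕ} {A B : Set (Fin n × Fin n)} (hA : A ∈ Omega dm dp)
    (hl : ∀ x, (x, x) ∉ B)
    (hr : ∀ x, (∀ y, (x, y) ∈ B ↔ (x, y) ∈ A) ∨ ∃ u v, (x, u) ∈ A ∧ (x, v) ∉ A ∧
      ∀ y, (x, y) ∈ B ↔ (y = v ∨ ((x, y) ∈ A ∧ y ≠ u)))
    (hc : ∀ x, (∀ y, (y, x) ∈ B ↔ (y, x) ∈ A) ∨ ∃ u v, (u, x) ∈ A ∧ (v, x) ∉ A ∧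
      ∀ y, (y, x) ∈ B ↔ (y = v ∨ ((y, x) ∈ A ∧ y ≠ u))) : B ∈ Omega dm dp := by
  have key : ∀ (R S : Set (Fin n)), ((∀ y, y ∈ S ↔ y ∈ R) ∨ ∃ u v, u ∈ R ∧ v ∉ R ∧
      ∀ y, y ∈ S ↔ (y = v ∨ (y ∈ R ∧ y ≠ u))) → S.ncard = R.ncard := by
    rintro R S (h | ⟨u, v, hu, hv, h⟩)
    · rw [Set.ext h]
    · have : S = insert v (R \ {u}) := by ext y; simp [h]
      rw [this, Set.ncard_exchange hv hu]
  refine ⟨?_, fun j => ?_, fun j => ?_⟩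
  · rintro ⟨x, y⟩ h hxy
    obtain rfl : x = y := hxy
    exact hl x h
  · rw [← hA.2.1 j]; exact key _ _ (hr j)
  · rw [← hA.2.2 j]; exact key _ _ (hc j)

lemma dswitch_omega {dm dp : Fin n → ℕ} {A B : Set (Fin n × Fin n)} (h : DSwitch A B)
    (hA : A ∈ Omega dm dp) : B ∈ Omega dm dp := by
  obtain ⟨i, j, k, l, h1, h2, h3, h4, h5, h6, m1, m2, m3, m4, rfl⟩ := h
  have e : ∀ x y, (x, y) ∈ A \ {(i, j), (k, l)} ∪ {(i, l), (k, j)} ↔ _ := fun x y => mem_sw (A := A)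
  have hl : ∀ x, (x, x) ∉ A := fun x hx => hA.1 _ hx rfl
  refine omega_of_exchange hA ?_ ?_ ?_
  · intro x; rw [e]; have := hl x; grind
  · intro x
    by_cases hi : x = i
    · exact .inr ⟨j, l, hi ▸ m1, hi ▸ m3, fun y => by rw [e]; grind⟩
    by_cases hk : x = k
    · exact .inr ⟨l, j, hk ▸ m2, hk ▸ m4, fun y => by rw [e]; grind⟩
    exact .inl fun y => by rw [e]; grind
  · intro x
    by_cases hj : x = j
    · exact .inr ⟨i, k, hj ▸ m1, hj ▸ m4, fun y => by rw [e]; grind⟩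
    by_cases hl : x = l
    · exact .inr ⟨k, i, hl ▸ m2, hl ▸ m3, fun y => by rw [e]; grind⟩
    exact .inl fun y => by rw [e]; grind

lemma rev_omega {dm dp : Fin n → ℕ} {A : Set (Fin n × Fin n)} {a b c : Fin n} (h : Tri A a b c)
    (hA : A ∈ Omega dm dp) : rev A a b c ∈ Omega dm dp := by
  obtain ⟨h1, h2, h3, m1, m2, m3, m4, m5, m6⟩ := h
  have hl : ∀ x, (x, x) ∉ A := fun x hx => hA.1 _ hx rfl
  refine omega_of_exchange hA ?_ ?_ ?_
  · intro x; rw [mem_rev]; have := hl x; grind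
  · intro x
    by_cases ha : x = a
    · exact .inr ⟨b, c, ha ▸ m1, ha ▸ m6, fun y => by rw [mem_rev]; grind⟩
    by_cases hb : x = b
    · exact .inr ⟨c, a, hb ▸ m2, hb ▸ m4, fun y => by rw [mem_rev]; grind⟩
    by_cases hc : x = c
    · exact .inr ⟨a, b, hc ▸ m3, hc ▸ m5, fun y => by rw [mem_rev]; grind⟩
    exact .inl fun y => by rw [mem_rev]; grind
  · intro x
    by_cases ha : x = a
    · exact .inr ⟨c, b, ha ▸ m3, ha ▸ m4, fun y => by rw [mem_rev]; grind⟩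
    by_cases hb : x = b
    · exact .inr ⟨a, c, hb ▸ m1, hb ▸ m5, fun y => by rw [mem_rev]; grind⟩
    by_cases hc : x = c
    · exact .inr ⟨b, a, hc ▸ m2, hc ▸ m6, fun y => by rw [mem_rev]; grind⟩
    exact .inl fun y => by rw [mem_rev]; grind

lemma reach_omega {dm dp : Fin n → ℕ} {A B : Set (Fin n × Fin n)} (h : Reach A B)
    (hA : A ∈ Omega dm dp) : B ∈ Omega dm dp := by
  induction h with
  | refl => exact hA
  | tail _ h ih => exact dswitch_omega h ih

/-! ### Decreasing the symmetric difference -/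

lemma exists_row {dm dp : Fin n → ℕ} {A B : Set (Fin n × Fin n)} (hA : A ∈ Omega dm dp)
    (hB : B ∈ Omega dm dp) {x y : Fin n} (h : (x, y) ∈ A) (h' : (x, y) ∉ B) :
    ∃ z, (x, z) ∈ B ∧ (x, z) ∉ A := by
  by_contra! hc
  have hs : {w | (x, w) ∈ B} ⊆ {w | (x, w) ∈ A} := fun w hw => hc w hw
  have he := Set.eq_of_subset_of_ncard_le hs (by rw [hA.2.1 x, hB.2.1 x])
  exact h' (he.symm ▸ h : y ∈ {w | (x, w) ∈ B})

lemma exists_col {dm dp : Fin n → ℕ} {A B : Set (Fin n × Fin n)} (hA : A ∈ Omega dm dp)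
    (hB : B ∈ Omega dm dp) {x y : Fin n} (h : (x, y) ∈ A) (h' : (x, y) ∉ B) :
    ∃ z, (z, y) ∈ B ∧ (z, y) ∉ A :=
  exists_row (omega_flip hA) (omega_flip hB) (x := y) (y := x) h h'

/-- `P` and `Q` are the positions of `+1` and `-1` in the difference of two adjacency matrices to
which no distance-decreasing switch applies (`hP`, `hQ`). A row with the fewest `+1` entries then
has only one of them, and following the signs from it closes up into a 3-cycle. -/
lemma exists_tri (P Q : Fin n → Fin n → Prop) (hd : ∀ x y, P x y → ¬ Q x y)
    (iP : ∀ x, ¬ P x x) (iQ : ∀ x, ¬ Q x x)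
    (row : ∀ x y, Q x y → ∃ z, P x z) (col : ∀ x y, P x y → ∃ z, Q z y)
    (hP : ∀ r c r' c', P r c → Q r' c → P r' c' → r ≠ c' → P r c')
    (hQ : ∀ r c r' c', Q r c → P r' c → Q r' c' → r ≠ c' → Q r c')
    (hne : ∃ x y, P x y) :
    ∃ a b c, P a b ∧ P b c ∧ P c a ∧ Q b a ∧ Q c b ∧ Q a c := by
  obtain ⟨r, ⟨c, hrc⟩, hmin⟩ := Set.exists_min_image {x | ∃ y, P x y}
    (fun x => {y | P x y}.ncard) (Set.toFinite _) hne
  -- a row with a `-1` in the column of a `+1` of a minimal row `r` has as `+1` positions those of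
  -- row `r`, with that column replaced by the column `r`
  have step : ∀ r, (∀ s ∈ {x | ∃ y, P x y}, {y | P r y}.ncard ≤ {y | P s y}.ncard) →
      ∀ c s, P r c → Q s c → {y | P s y} = insert r ({y | P r y} \ {c}) := by
    intro r hmin c s hrc hsc
    have hsub : {y | P s y} ⊆ insert r ({y | P r y} \ {c}) := by
      intro y hy
      by_cases hyr : y = r
      · exact .inl hyr
      · exact .inr ⟨hP r c s y hrc hsc hy (Ne.symm hyr), fun h => hd s c (h ▸ hy) hsc⟩
    refine Set.eq_of_subset_of_ncard_le hsub ?_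
    rw [Set.ncard_exchange (s := {y | P r y}) (iP r) hrc]
    exact hmin s (row _ _ hsc)
  have minstep : ∀ r, (∀ s ∈ {x | ∃ y, P x y}, {y | P r y}.ncard ≤ {y | P s y}.ncard) →
      ∀ c s, P r c → Q s c → (∀ t ∈ {x | ∃ y, P x y}, {y | P s y}.ncard ≤ {y | P t y}.ncard) := by
    intro r hmin c s hrc hsc t ht
    rw [step r hmin c s hrc hsc, Set.ncard_exchange (s := {y | P r y}) (iP r) hrc]
    exact hmin t ht
  have single : ∀ c', P r c' → c' = c := by
    intro c' hrc'
    by_contra hcc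
    obtain ⟨s, hs⟩ := col _ _ hrc
    obtain ⟨s', hs'⟩ := col _ _ hrc'
    have e := step r hmin c s hrc hs
    have e' := step r hmin c' s' hrc' hs'
    have p1 : P s' c := by
      have : c ∈ {y | P s' y} := by rw [e']; exact .inr ⟨hrc, fun h => hcc h.symm⟩
      exact this
    have p2 : P s c' := by
      have : c' ∈ {y | P s y} := by rw [e]; exact .inr ⟨hrc', hcc⟩
      exact this
    have hne : s' ≠ c' := fun h => iQ _ (h ▸ hs')
    exact hd _ _ (hP s' c s c' p1 hs p2 hne) hs'
  have hrow : {y | P r y} = {c} := by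
    ext y; exact ⟨single y, fun h => h ▸ hrc⟩
  have one : ∀ r c s, (∀ s ∈ {x | ∃ y, P x y}, {y | P r y}.ncard ≤ {y | P s y}.ncard) →
      {y | P r y} = {c} → Q s c → {y | P s y} = {r} := by
    intro r c s hm hr hs
    have hrc : P r c := by
      have : c ∈ {y | P r y} := by rw [hr]; rfl
      exact this
    rw [step r hm c s hrc hs, hr]
    simp
  have of_eq : ∀ {r c}, {y | P r y} = {c} → P r c := by
    intro r c h
    have : c ∈ {y | P r y} := by rw [h]; rfl
    exact this
  obtain ⟨r2, q2⟩ := col _ _ hrc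
  have h2 := one r c r2 hmin hrow q2
  have hmin2 := minstep r hmin c r2 hrc q2
  obtain ⟨r3, q3⟩ := col _ _ (of_eq h2)
  have h3 := one r2 r r3 hmin2 h2 q3
  have hmin3 := minstep r2 hmin2 r r3 (of_eq h2) q3
  obtain ⟨r4, q4⟩ := col _ _ (of_eq h3)
  have h4 := one r3 r2 r4 hmin3 h3 q4
  have p2 := of_eq h2
  have p3 := of_eq h3
  have p4 := of_eq h4
  have n12 : r ≠ r2 := fun h => iP r2 (h ▸ p2)
  have n23 : r2 ≠ r3 := fun h => iP r3 (h ▸ p3)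
  have hc3 : r3 = c := by
    by_contra hne
    have q := hQ r3 r r2 c q3 p2 q2 hne
    have := single _ (hP r c r3 r2 hrc q p3 n12)
    exact iQ r2 (this ▸ q2)
  subst hc3
  have h41 : r4 = r := by
    by_contra hne
    have q := hQ r4 r2 r3 r q4 p3 q3 hne
    exact hd _ _ (hP r2 r r4 r3 p2 q p4 n23) q2
  subst h41
  exact ⟨r4, r3, r2, hrc, p3, p2, q3, q2, q4⟩

lemma ncard_lt_of_exchange {α : Type*} [Finite α] {S T : Set α} {e p q : α}
    (hsub : T ⊆ insert e ((S \ {p}) \ {q})) (hp : p ∈ S) (hq : q ∈ S) (hqp : q ≠ p) :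
    T.ncard < S.ncard := by
  have c1 := Set.ncard_sdiff_singleton_add_one hp
  have c2 := Set.ncard_sdiff_singleton_add_one (s := S \ {p}) ⟨hq, hqp⟩
  have c3 := Set.ncard_le_ncard hsub
  have c4 := Set.ncard_insert_le e ((S \ {p}) \ {q})
  omega

lemma sw_decrease {G H : Set (Fin n × Fin n)} {i j k l : Fin n} (hik : i ≠ k)
    (h1 : (i, j) ∈ G) (h2 : (k, l) ∈ G) (h1' : (i, j) ∉ H) (h2' : (k, l) ∉ H)
    (h3 : (k, j) ∈ H) :
    (symmDiff (sw G i j k l) H).ncard < (symmDiff G H).ncard := by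
  have hsub : symmDiff (sw G i j k l) H ⊆
      insert (i, l) ((symmDiff G H \ {(i, j)}) \ {(k, l)}) := by
    rintro ⟨x, y⟩ h
    simp only [Set.mem_symmDiff, mem_sw, Set.mem_insert_iff, Set.mem_sdiff, Set.mem_singleton_iff,
      Prod.mk.injEq] at h ⊢
    grind
  exact ncard_lt_of_exchange hsub (.inl ⟨h1, h1'⟩) (.inl ⟨h2, h2'⟩) (by simp [hik.symm])

/-- If no switch of `G` decreases the distance to `H`, nor conversely, then the positions of the
arcs of `G` missing in `H` have the closure property used in `exists_tri`. -/
lemma closure_of_no_decrease {G H : Set (Fin n × Fin n)}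
    (lG : ∀ x, (x, x) ∉ G) (lH : ∀ x, (x, x) ∉ H)
    (hG : ∀ G', DSwitch G G' → ¬ (symmDiff G' H).ncard < (symmDiff G H).ncard)
    (hH : ∀ H', DSwitch H H' → ¬ (symmDiff H' G).ncard < (symmDiff H G).ncard)
    (r c r' c' : Fin n) (p : (r, c) ∈ G ∧ (r, c) ∉ H) (q : (r', c) ∈ H ∧ (r', c) ∉ G)
    (p' : (r', c') ∈ G ∧ (r', c') ∉ H) (hne : r ≠ c') : (r, c') ∈ G ∧ (r, c') ∉ H := by
  have n1 : r ≠ c := fun h => lG c (h ▸ p.1)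
  have n2 : r' ≠ c := fun h => lH c (h ▸ q.1)
  have n3 : r' ≠ c' := fun h => lG c' (h ▸ p'.1)
  have n4 : r ≠ r' := fun h => q.2 (h ▸ p.1)
  have n5 : c ≠ c' := fun h => q.2 (h ▸ p'.1)
  have hin : (r, c') ∈ G := by
    by_contra hn
    exact hG _ (dswitch_sw ⟨n1, n4, hne, n2.symm, n5, n3⟩ ⟨p.1, p'.1, hn, q.2⟩)
      (sw_decrease n4 p.1 p'.1 p.2 p'.2 q.1)
  refine ⟨hin, fun hn => ?_⟩
  have hd := dswitch_sw (A := H) (i := r) (j := c') (k := r') (l := c)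
    ⟨hne, n4, n1, n3.symm, n5.symm, n2⟩ ⟨hn, q.1, p.2, p'.2⟩
  refine hH _ hd ?_
  have hsub : symmDiff (sw H r c' r' c) G ⊆
      insert (r, c') ((symmDiff H G \ {(r, c)}) \ {(r', c')}) := by
    rintro ⟨x, y⟩ h
    simp only [Set.mem_symmDiff, mem_sw, Set.mem_insert_iff, Set.mem_sdiff, Set.mem_singleton_iff,
      Prod.mk.injEq] at h ⊢
    grind
  exact ncard_lt_of_exchange hsub (.inr p) (.inr p') (by simp [n4.symm])

/-- Without stuck cycles, any two digraphs with the same degrees are joined by switches: some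
switch or 3-cycle reversal always brings them closer together. -/
lemma reach_of_not_stuck {dm dp : Fin n → ℕ}
    (hs : ∀ A ∈ Omega dm dp, ∀ a b c, ¬ Stuck A a b c) (N : ℕ) :
    ∀ G ∈ Omega dm dp, ∀ H ∈ Omega dm dp, (symmDiff G H).ncard = N → Reach G H := by
  induction N using Nat.strong_induction_on with
  | _ N ih =>
  intro G hG H hH hN
  by_cases hGH : G = H
  · exact hGH ▸ .refl
  by_contra hr
  have lG : ∀ x, (x, x) ∉ G := fun x hx => hG.1 _ hx rfl
  have lH : ∀ x, (x, x) ∉ H := fun x hx => hH.1 _ hx rfl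
  have nG : ∀ G', Reach G G' → ¬ (symmDiff G' H).ncard < (symmDiff G H).ncard := fun G' h hlt =>
    hr (h.trans (ih _ (hN ▸ hlt) G' (reach_omega h hG) H hH rfl))
  have nH : ∀ H', Reach H H' → ¬ (symmDiff H' G).ncard < (symmDiff H G).ncard := by
    intro H' h hlt
    rw [symmDiff_comm H' G, symmDiff_comm H G] at hlt
    exact hr ((ih _ (hN ▸ hlt) G hG H' (reach_omega h hH) rfl).trans (reach_symm h))
  have hne : ∃ x y, (x, y) ∈ G ∧ (x, y) ∉ H := by
    by_contra! hc
    have hsub : G ⊆ H := fun p hp => hc p.1 p.2 hp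
    refine hGH (hsub.antisymm fun p hp => ?_)
    by_contra hpG
    obtain ⟨z, hz, hz'⟩ := exists_row hH hG (x := p.1) (y := p.2) hp hpG
    exact hz' (hsub hz)
  obtain ⟨a, b, c, h1, h2, h3, h4, h5, h6⟩ := exists_tri
    (fun x y => (x, y) ∈ G ∧ (x, y) ∉ H) (fun x y => (x, y) ∈ H ∧ (x, y) ∉ G)
    (fun x y h h' => h.2 h'.1) (fun x h => lG x h.1) (fun x h => lH x h.1)
    (fun x y h => exists_row hH hG h.1 h.2) (fun x y h => exists_col hG hH h.1 h.2)
    (closure_of_no_decrease lG lH (fun G' h => nG G' (.single h)) (fun H' h => nH H' (.single h)))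
    (closure_of_no_decrease lH lG (fun G' h => nH G' (.single h)) (fun H' h => nG H' (.single h)))
    hne
  have hT : Tri G a b c :=
    ⟨fun h => lG b (h ▸ h1.1), fun h => lG c (h ▸ h3.1), fun h => lG c (h ▸ h2.1),
      h1.1, h2.1, h3.1, h4.2, h5.2, h6.2⟩
  refine nG _ (reach_rev hT (hs G hG a b c)) (Set.ncard_lt_ncard ⟨?_, ?_⟩)
  · rintro ⟨x, y⟩ h
    simp only [Set.mem_symmDiff, mem_rev] at h ⊢
    grind
  · intro h
    have := h (a := (a, b)) (.inl h1)
    obtain ⟨n1, n2, n3, -⟩ := hT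
    simp only [Set.mem_symmDiff, mem_rev] at this
    grind

/-! ### A stuck cycle is shared by all digraphs with the same degrees -/

lemma sum_row {dm dp : Fin n → ℕ} {A : Set (Fin n × Fin n)} (hA : A ∈ Omega dm dp) (x : Fin n) :
    ∑ y, (if (x, y) ∈ A then 1 else 0 : ℤ) = dp x := by
  rw [← hA.2.1 x, Set.ncard_eq_toFinset_card', Finset.sum_boole]
  congr 2
  ext y; simp

lemma sum_col {dm dp : Fin n → ℕ} {A : Set (Fin n × Fin n)} (hA : A ∈ Omega dm dp) (y : Fin n) :
    ∑ x, (if (x, y) ∈ A then 1 else 0 : ℤ) = dm y :=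
  sum_row (omega_flip hA) y

/-- The total weight of a digraph under row-plus-column weights depends only on its degrees. If
`A` contains all pairs of positive weight and none of negative weight, it has maximal total weight,
so every digraph with the same degrees agrees with `A` on all pairs of nonzero weight. -/
lemma agree_of_weight {dm dp : Fin n → ℕ} {A H : Set (Fin n × Fin n)} (hA : A ∈ Omega dm dp)
    (hH : H ∈ Omega dm dp) (wr wc : Fin n → ℤ)
    (hpos : ∀ x y, x ≠ y → 0 < wr x + wc y → (x, y) ∈ A)
    (hneg : ∀ x y, x ≠ y → wr x + wc y < 0 → (x, y) ∉ A) (x y : Fin n) (hw : wr x + wc y ≠ 0) :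
    (x, y) ∈ H ↔ (x, y) ∈ A := by
  have lA : ∀ x, (x, x) ∉ A := fun x hx => hA.1 _ hx rfl
  have lH : ∀ x, (x, x) ∉ H := fun x hx => hH.1 _ hx rfl
  have total : ∀ B ∈ Omega dm dp, ∑ x, ∑ y, (if (x, y) ∈ B then 1 else 0 : ℤ) * (wr x + wc y) =
      ∑ x, (dp x : ℤ) * wr x + ∑ y, (dm y : ℤ) * wc y := by
    intro B hB
    simp only [mul_add, Finset.sum_add_distrib]
    congr 1
    · exact Finset.sum_congr rfl fun x _ => by rw [← Finset.sum_mul, sum_row hB]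
    · rw [Finset.sum_comm]
      exact Finset.sum_congr rfl fun y _ => by rw [← Finset.sum_mul, sum_col hB]
  have hnn : ∀ x y, 0 ≤ ((if (x, y) ∈ A then 1 else 0 : ℤ) - (if (x, y) ∈ H then 1 else 0 : ℤ)) *
      (wr x + wc y) := by
    intro x y
    by_cases hxy : x = y
    · subst hxy; simp [lA, lH]
    rcases lt_trichotomy (wr x + wc y) 0 with h | h | h
    · rw [if_neg (hneg x y hxy h)]; split_ifs <;> nlinarith
    · simp [h]
    · rw [if_pos (hpos x y hxy h)]; split_ifs <;> nlinarith
  have hzero : ∑ x, ∑ y, ((if (x, y) ∈ A then 1 else 0 : ℤ) -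
      (if (x, y) ∈ H then 1 else 0 : ℤ)) * (wr x + wc y) = 0 := by
    simp only [sub_mul, Finset.sum_sub_distrib]
    rw [total A hA, total H hH, sub_self]
  rw [Finset.sum_eq_zero_iff_of_nonneg fun x _ => Finset.sum_nonneg fun y _ => hnn x y] at hzero
  have h1 := hzero x (Finset.mem_univ _)
  rw [Finset.sum_eq_zero_iff_of_nonneg fun y _ => hnn x y] at h1
  have h2 := h1 y (Finset.mem_univ _)
  rcases mul_eq_zero.mp h2 with h | h
  · split_ifs at h <;> simp_all
  · exact absurd h hw

/-- The weights `1, 0, -1` record, for rows, whether a vertex sends arcs to all of the cycle, lies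
on it, or sends none; similarly for columns. -/
lemma stuck_agree {dm dp : Fin n → ℕ} {A H : Set (Fin n × Fin n)} {a b c : Fin n}
    (hA : A ∈ Omega dm dp) (hH : H ∈ Omega dm dp) (hs : Stuck A a b c) :
    (∀ x u, x ≠ a → x ≠ b → x ≠ c → u = a ∨ u = b ∨ u = c →
      ((x, u) ∈ H ↔ (x, u) ∈ A) ∧ ((u, x) ∈ H ↔ (u, x) ∈ A)) ∧
    (∀ x y, x ≠ a → x ≠ b → x ≠ c → y ≠ a → y ≠ b → y ≠ c → ((x, a) ∈ A ↔ (a, y) ∈ A) →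
      ((x, y) ∈ H ↔ (x, y) ∈ A)) := by
  obtain ⟨-, hout, hin, hoo⟩ := hs
  let wr : Fin n → ℤ := fun x => if x = a ∨ x = b ∨ x = c then 0 else if (x, a) ∈ A then 1 else -1
  let wc : Fin n → ℤ := fun x => if x = a ∨ x = b ∨ x = c then 0 else if (a, x) ∈ A then 1 else -1
  have key := agree_of_weight hA hH wr wc (by simp only [wr, wc]; grind)
    (by simp only [wr, wc]; grind)
  refine ⟨fun x u xa xb xc hu => ⟨key x u ?_, key u x ?_⟩, fun x y xa xb xc ya yb yc hxy =>
    key x y ?_⟩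
  · simp only [wr, wc]; grind
  · simp only [wr, wc]; grind
  · simp only [wr, wc]; grind

lemma row_exchange {dm dp : Fin n → ℕ} {A H : Set (Fin n × Fin n)} {u v w : Fin n}
    (hA : A ∈ Omega dm dp) (hH : H ∈ Omega dm dp)
    (ho : ∀ y, y ≠ u → y ≠ v → y ≠ w → ((u, y) ∈ H ↔ (u, y) ∈ A))
    (hv : (u, v) ∈ A) (hw : (u, w) ∉ A) : (u, v) ∈ H ↔ (u, w) ∉ H := by
  have lH : (u, u) ∉ H := fun hx => hH.1 _ hx rfl
  have lA : (u, u) ∉ A := fun hx => hA.1 _ hx rfl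
  constructor
  · intro hvH hwH
    obtain ⟨z, hz, hz'⟩ := exists_row hH hA hwH hw
    have := ho z
    grind
  · intro hwH
    by_contra hvH
    obtain ⟨z, hz, hz'⟩ := exists_row hA hH hv hvH
    have := ho z
    grind

/-- All digraphs with the degrees of `A` are stuck at the vertices of the same 3-cycle, which may
be traversed in the opposite direction. -/
lemma stuck_transfer {dm dp : Fin n → ℕ} {A H : Set (Fin n × Fin n)} {a b c : Fin n}
    (hA : A ∈ Omega dm dp) (hH : H ∈ Omega dm dp) (hs : Stuck A a b c) :
    Stuck H a b c ∨ Stuck H a c b := by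
  obtain ⟨h1, h2⟩ := stuck_agree hA hH hs
  obtain ⟨⟨n1, n2, n3, m1, m2, m3, m4, m5, m6⟩, hout, hin, hoo⟩ := hs
  -- the part of `H` in the cycle has the same row and column sums as that of `A`
  have r1 : (a, b) ∈ H ↔ (a, c) ∉ H :=
    row_exchange hA hH (fun y ya yb yc => (h1 y a ya yb yc (by tauto)).2) m1 m6
  have r2 : (b, c) ∈ H ↔ (b, a) ∉ H :=
    row_exchange hA hH (fun y yb yc ya => (h1 y b ya yb yc (by tauto)).2) m2 m4
  have r3 : (c, a) ∈ H ↔ (c, b) ∉ H :=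
    row_exchange hA hH (fun y yc ya yb => (h1 y c ya yb yc (by tauto)).2) m3 m5
  have c1 : (c, a) ∈ H ↔ (b, a) ∉ H := row_exchange (omega_flip hA) (omega_flip hH)
    (fun y ya yc yb => (h1 y a ya yb yc (by tauto)).1) m3 m4
  have c2 : (a, b) ∈ H ↔ (c, b) ∉ H := row_exchange (omega_flip hA) (omega_flip hH)
    (fun y yb ya yc => (h1 y b ya yb yc (by tauto)).1) m1 m5
  by_cases hab : (a, b) ∈ H
  · left
    refine ⟨by clear h1 h2 hout hin hoo; unfold Tri; grind, ?_, ?_, ?_⟩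
    · grind
    · grind
    · grind
  · right
    refine ⟨by clear h1 h2 hout hin hoo; unfold Tri; grind, ?_, ?_, ?_⟩
    · grind
    · grind
    · grind

/-- A switch replacing the arc `(a, b)` of a stuck cycle would have to change pairs `(a, l)` and
`(k, b)`, which forces `k = l = c`. -/
lemma stuck_invariant {dm dp : Fin n → ℕ} {A B : Set (Fin n × Fin n)} {a b c : Fin n}
    (hA : A ∈ Omega dm dp) (hs : Stuck A a b c) (h : Reach A B) : (a, b) ∈ B := by
  induction h with
  | refl => exact hs.1.2.2.2.1
  | @tail B C hAB hBC ih =>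
    have hB := reach_omega hAB hA
    have hC := dswitch_omega hBC hB
    obtain ⟨gB, -⟩ := stuck_agree hA hB hs
    obtain ⟨gC, -⟩ := stuck_agree hA hC hs
    by_contra hn
    obtain ⟨i, j, k, l, h1, h2, h3, h4, h5, h6, p1, p2, p3, p4, rfl⟩ := hBC
    have e : ∀ x y, (x, y) ∈ B \ {(i, j), (k, l)} ∪ {(i, l), (k, j)} ↔ _ :=
      fun x y => mem_sw (A := B)
    simp only [e] at hn gC
    have q1 := gB l a
    have q2 := gC l a
    have q3 := gB k b
    have q4 := gC k b
    have q5 := gB j a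
    have q6 := gC j a
    have q7 := gB i b
    have q8 := gC i b
    clear gB gC e
    grind

/-! ### Translation to the sets `U⁰`, `U⁻`, `U⁺`, `U^±` -/

lemma isTriangle_iff {A : Set (Fin n × Fin n)} (hl : ∀ x, (x, x) ∉ A) (a b c : Fin n) :
    IsTriangle A a b c ↔ Tri A a b c := by
  unfold IsTriangle Tri
  constructor
  · rintro ⟨h1, h2, h3, he⟩
    have e : ∀ x y, _ ↔ _ := fun x y => Set.ext_iff.mp he (x, y)
    simp only [Set.mem_ofPred_eq, Set.mem_insert_iff, Set.mem_singleton_iff, Prod.mk.injEq] at e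
    have e1 := e a b
    have e2 := e b c
    have e3 := e c a
    have e4 := e b a
    have e5 := e c b
    have e6 := e a c
    clear e he
    grind
  · rintro ⟨h1, h2, h3, m⟩
    refine ⟨h1, h2, h3, ?_⟩
    ext ⟨x, y⟩
    simp only [Set.mem_ofPred_eq, Set.mem_insert_iff, Set.mem_singleton_iff, Prod.mk.injEq]
    have := hl a
    have := hl b
    have := hl c
    constructor
    · rintro ⟨h, rfl | rfl | rfl, rfl | rfl | rfl⟩ <;> simp_all
    · rintro (⟨rfl, rfl⟩ | ⟨rfl, rfl⟩ | ⟨rfl, rfl⟩) <;> simp_all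

lemma stuck_iff {A : Set (Fin n × Fin n)} (hl : ∀ x, (x, x) ∉ A) (v0 v1 v2 : Fin n) :
    (IsTriangle A v0 v1 v2 ∧
        (∀ x, x ∉ ({v0, v1, v2} : Set (Fin n)) →
          x ∈ U0 A {v0, v1, v2} ∪ Uminus A {v0, v1, v2} ∪
              Uplus A {v0, v1, v2} ∪ Upm A {v0, v1, v2}) ∧
        ([U0 A {v0, v1, v2}, Uminus A {v0, v1, v2},
          Uplus A {v0, v1, v2}, Upm A {v0, v1, v2}].Pairwise Disjoint) ∧
        (∀ x ∈ U0 A {v0, v1, v2} ∪ Uplus A {v0, v1, v2},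
          ∀ y ∈ U0 A {v0, v1, v2} ∪ Uminus A {v0, v1, v2}, (x, y) ∉ A) ∧
        (∀ x ∈ Uminus A {v0, v1, v2} ∪ Upm A {v0, v1, v2},
          ∀ y ∈ Uplus A {v0, v1, v2} ∪ Upm A {v0, v1, v2}, x ≠ y → (x, y) ∈ A)) ↔
      Stuck A v0 v1 v2 := by
  rw [isTriangle_iff hl, Stuck]
  refine and_congr_right fun _ => ?_
  simp only [Set.mem_union, U0, Uminus, Uplus, Upm, Set.mem_ofPred_eq, Set.mem_insert_iff,
    Set.mem_singleton_iff, forall_eq_or_imp, forall_eq, not_or]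
  constructor
  · rintro ⟨hp, -, hu1, hu2⟩
    refine ⟨fun x xa xb xc => ?_, fun x xa xb xc => ?_,
      fun x y xa xb xc ya yb yc xy => ⟨fun h1 h2 => ?_, fun h1 h2 => ?_⟩⟩
    · have := hp x ⟨xa, xb, xc⟩
      clear hp hu1 hu2
      grind
    · have := hp x ⟨xa, xb, xc⟩
      clear hp hu1 hu2
      grind
    · have hx := hp x ⟨xa, xb, xc⟩
      have hy := hp y ⟨ya, yb, yc⟩
      have := hu1 x (by clear hp hu1 hu2; grind) y
        (by clear hp hu1 hu2; grind)
      exact this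
    · have hx := hp x ⟨xa, xb, xc⟩
      have hy := hp y ⟨ya, yb, yc⟩
      exact hu2 x (by clear hp hu1 hu2; grind) y
        (by clear hp hu1 hu2; grind) xy
  · rintro ⟨hout, hin, hoo⟩
    refine ⟨fun x hx => ?_, ?_, fun x hx y hy => ?_, fun x hx y hy hxy => ?_⟩
    · have h1 := hout x hx.1 hx.2.1 hx.2.2
      have h2 := hin x hx.1 hx.2.1 hx.2.2
      clear hout hin hoo
      grind
    · simp only [List.pairwise_cons, List.mem_cons, List.not_mem_nil, or_false, forall_eq_or_imp,
        forall_eq, Set.disjoint_left, Set.mem_ofPred_eq]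
      clear hout hin hoo
      grind
    · by_cases hxy : x = y
      · exact hxy ▸ hl x
      · have := hoo x y
        clear hout hin hoo
        grind
    · have := hoo x y
      clear hout hin hoo
      grind

/-- LaMar's characterisation: the directed switch chain fails to be irreducible iff
every digraph in `Omega dm dp` contains a directed 3-cycle `U = {v0,v1,v2}` such that
`U⁰, U⁻, U⁺, U^±` partition the remaining vertices, no arc goes from `U⁰ ∪ U⁺` to
`U⁰ ∪ U⁻`, and every possible arc from `U⁻ ∪ U^±` to `U⁺ ∪ U^±` is present. -/
theorem lamar_characterisation
    (dm dp : Fin n → ℕ)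
    (hdigraphical : (Omega dm dp).Nonempty) :
    ¬ SwitchIrreducible dm dp ↔
      ∀ A ∈ Omega dm dp, ∃ v0 v1 v2 : Fin n,
        IsTriangle A v0 v1 v2 ∧
        (∀ x, x ∉ ({v0, v1, v2} : Set (Fin n)) →
          x ∈ U0 A {v0, v1, v2} ∪ Uminus A {v0, v1, v2} ∪
              Uplus A {v0, v1, v2} ∪ Upm A {v0, v1, v2}) ∧
        ([U0 A {v0, v1, v2}, Uminus A {v0, v1, v2},
          Uplus A {v0, v1, v2}, Upm A {v0, v1, v2}].Pairwise Disjoint) ∧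
        (∀ x ∈ U0 A {v0, v1, v2} ∪ Uplus A {v0, v1, v2},
          ∀ y ∈ U0 A {v0, v1, v2} ∪ Uminus A {v0, v1, v2}, (x, y) ∉ A) ∧
        (∀ x ∈ Uminus A {v0, v1, v2} ∪ Upm A {v0, v1, v2},
          ∀ y ∈ Uplus A {v0, v1, v2} ∪ Upm A {v0, v1, v2}, x ≠ y → (x, y) ∈ A) := by
  have hl : ∀ A ∈ Omega dm dp, ∀ x, (x, x) ∉ A := fun A hA x hx => hA.1 _ hx rfl
  constructor
  · intro hirr A hA
    by_contra hns
    simp only [stuck_iff (hl A hA)] at hns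
    refine hirr fun G hG H hH => reach_of_not_stuck (fun B hB a b c hs => hns ?_) _ G hG H hH rfl
    rcases stuck_transfer hB hA hs with h | h
    · exact ⟨a, b, c, h⟩
    · exact ⟨a, c, b, h⟩
  · intro h hirr
    obtain ⟨A, hA⟩ := hdigraphical
    obtain ⟨a, b, c, hs⟩ := h A hA
    rw [stuck_iff (hl A hA)] at hs
    have hr := stuck_invariant hA hs (hirr A hA _ (rev_omega hs.1 hA))
    obtain ⟨h1, h2, h3, -⟩ := hs.1
    rw [mem_rev] at hr
    grind

end DirectedSwitchChain
end
end

section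
/- Let L be a directed encoding for the directed degree sequence ᵈ with exactly p 2-defect arcs and exactly q (−1)-defect arcs, and let a_1, b_1 ∈ [n] be distinct vertices with L(a_1, b_1) ≠ 0. Then the number of ordered pairs of vertices (a_2, b_2) such that L(a_2, b_2) = 1, L(a_2, b_1) = 0 and a_1, b_1, a_2, b_2 are all distinct is at least m − 2p + q − ( r_max·( r_max − ζ_{b_1}^- + 2·η_{b_1}^- + 2 ) + η_{a_1}^- + η_{b_1}^+ − 2·(ζ_{a_1}^- + ζ_{b_1}^+) + Σ_{y ∈ N̂_L^-(b_1)} (η_y^+ − 2·ζ_y^+) ). -/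
/-!
Entries of `L` lie in `{-1, 0, 1, 2}`, so
`[x = 1] = x - 2 [x = 2] + [x = -1]` for each entry `x`. Summing this over a row, a column or the
whole matrix shows that there are `d⁺_v - 2 ζ⁺_v + η⁺_v` arcs labelled `1` with tail `v`,
`d⁻_v - 2 ζ⁻_v + η⁻_v` with head `v`, and `m - 2 p + q` in total.

An arc labelled `1` is not a valid choice of `(a₂, b₂)` only if its tail lies in `N̂⁻(b₁)` (this
includes tail `a₁` and head `b₁`), its head is `a₁`, or its tail is `b₁`. A union bound over these
three events, with every semi-degree at most `r_max` and
`|N̂⁻(b₁)| = d⁻_{b₁} - ζ⁻_{b₁} + 2 η⁻_{b₁}`, gives the claim.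
-/

open scoped Classical

noncomputable section

namespace DirectedSwitchChain

variable {n : ℕ}

/-- A directed encoding for the directed degree sequence `(dm, dp)`: an integer
matrix with zero diagonal, entries in `{-1, 0, 1, 2}`, row sums `dp` and column
sums `dm`. -/
def IsDirEncoding (dm dp : Fin n → ℕ) (L : Matrix (Fin n) (Fin n) ℤ) : Prop :=
  (∀ i, L i i = 0) ∧
  (∀ i j, L i j = -1 ∨ L i j = 0 ∨ L i j = 1 ∨ L i j = 2) ∧
  (∀ j, ∑ k, L j k = (dp j : ℤ)) ∧
  (∀ j, ∑ k, L k j = (dm j : ℤ))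

/-- `N⁺_L(v)`: out-neighbours of `v` along arcs labelled `1`. -/
def nbrOut (L : Matrix (Fin n) (Fin n) ℤ) (v : Fin n) : Set (Fin n) :=
  {w | w ≠ v ∧ L v w = 1}

/-- `N⁻_L(v)`: in-neighbours of `v` along arcs labelled `1`. -/
def nbrIn (L : Matrix (Fin n) (Fin n) ℤ) (v : Fin n) : Set (Fin n) :=
  {w | w ≠ v ∧ L w v = 1}

/-- `N̂⁺_L(v)`: all out-neighbours of `v` (along arcs with nonzero label). -/
def nbrOutHat (L : Matrix (Fin n) (Fin n) ℤ) (v : Fin n) : Set (Fin n) :=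
  {w | w ≠ v ∧ L v w ≠ 0}

/-- `N̂⁻_L(v)`: all in-neighbours of `v` (along arcs with nonzero label). -/
def nbrInHat (L : Matrix (Fin n) (Fin n) ℤ) (v : Fin n) : Set (Fin n) :=
  {w | w ≠ v ∧ L w v ≠ 0}

/-- `ζ⁺_v`: the number of 2-defect arcs with tail `v`. -/
def zetaOut (L : Matrix (Fin n) (Fin n) ℤ) (v : Fin n) : ℕ :=
  {w | w ≠ v ∧ L v w = 2}.ncard

/-- `ζ⁻_v`: the number of 2-defect arcs with head `v`. -/
def zetaIn (L : Matrix (Fin n) (Fin n) ℤ) (v : Fin n) : ℕ :=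
  {w | w ≠ v ∧ L w v = 2}.ncard

/-- `η⁺_v`: the number of (−1)-defect arcs with tail `v`. -/
def etaOut (L : Matrix (Fin n) (Fin n) ℤ) (v : Fin n) : ℕ :=
  {w | w ≠ v ∧ L v w = -1}.ncard

/-- `η⁻_v`: the number of (−1)-defect arcs with head `v`. -/
def etaIn (L : Matrix (Fin n) (Fin n) ℤ) (v : Fin n) : ℕ :=
  {w | w ≠ v ∧ L w v = -1}.ncard


/-- The set of (ordered) arcs of `L` carrying the label `c`. -/
def labelArcs (L : Matrix (Fin n) (Fin n) ℤ) (c : ℤ) : Set (Fin n × Fin n) :=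
  {ab | ab.1 ≠ ab.2 ∧ L ab.1 ab.2 = c}

/-- The maximum semi-degree. -/
def rmax (dm dp : Fin n → ℕ) : ℕ := Finset.univ.sup fun j => max (dm j) (dp j)

lemma ncard_setOf_eq_sum {α : Type*} [Fintype α] (P : α → Prop)
    [DecidablePred P] :
    (({x | P x} : Set α).ncard : ℤ) = ∑ x, if P x then 1 else 0 := by
  rw [Set.ncard_eq_toFinset_card', Finset.sum_boole]
  congr 2
  ext x
  simp

/-- Here `f` is a row or column of the matrix. The condition `w ≠ v` is automatic, since `f`
vanishes at `v` and `c` is nonzero. -/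
lemma ncard_line_eq_sum (f : Fin n → ℤ) (v : Fin n) (hf : f v = 0) (c : ℤ) (hc : c ≠ 0) :
    (({w | w ≠ v ∧ f w = c} : Set (Fin n)).ncard : ℤ) = ∑ w, if f w = c then 1 else 0 := by
  rw [ncard_setOf_eq_sum]
  refine Finset.sum_congr rfl fun w _ => if_congr ⟨fun h => h.2, fun h => ⟨?_, h⟩⟩ rfl rfl
  rintro rfl
  exact hc (h.symm.trans hf)

lemma ncard_labelArcs_eq_sum (L : Matrix (Fin n) (Fin n) ℤ) (hd : ∀ i, L i i = 0)
    (c : ℤ) (hc : c ≠ 0) :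
    ((labelArcs L c).ncard : ℤ) = ∑ a, ∑ b, if L a b = c then 1 else 0 := by
  unfold labelArcs
  rw [ncard_setOf_eq_sum, Fintype.sum_prod_type]
  refine Finset.sum_congr rfl fun a _ => Finset.sum_congr rfl fun b _ =>
    if_congr ⟨fun h => h.2, fun h => ⟨?_, h⟩⟩ rfl rfl
  rintro (rfl : a = b)
  exact hc (h.symm.trans (hd a))

lemma indicator_one_eq {x : ℤ} (hx : x = -1 ∨ x = 0 ∨ x = 1 ∨ x = 2) :
    (if x = 1 then 1 else 0 : ℤ) =
      x - 2 * (if x = 2 then 1 else 0) + (if x = -1 then 1 else 0) := by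
  rcases hx with rfl | rfl | rfl | rfl <;> norm_num

lemma indicator_ne_zero_eq {x : ℤ} (hx : x = -1 ∨ x = 0 ∨ x = 1 ∨ x = 2) :
    (if x ≠ 0 then 1 else 0 : ℤ) =
      x - (if x = 2 then 1 else 0) + 2 * (if x = -1 then 1 else 0) := by
  rcases hx with rfl | rfl | rfl | rfl <;> norm_num

lemma dm_le_rmax (dm dp : Fin n → ℕ) (v : Fin n) : dm v ≤ rmax dm dp :=
  (le_max_left _ _).trans
    (Finset.le_sup (f := fun j => max (dm j) (dp j)) (Finset.mem_univ v))

lemma dp_le_rmax (dm dp : Fin n → ℕ) (v : Fin n) : dp v ≤ rmax dm dp :=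
  (le_max_right _ _).trans
    (Finset.le_sup (f := fun j => max (dm j) (dp j)) (Finset.mem_univ v))

section Counts

variable {dm dp : Fin n → ℕ} {L : Matrix (Fin n) (Fin n) ℤ}

lemma sum_out_one (hL : IsDirEncoding dm dp L) (v : Fin n) :
    (∑ w, if L v w = 1 then 1 else 0 : ℤ) = dp v - 2 * zetaOut L v + etaOut L v := by
  obtain ⟨hd, he, hr, -⟩ := hL
  unfold zetaOut etaOut
  rw [ncard_line_eq_sum (fun w => L v w) v (hd v) 2 (by norm_num),
    ncard_line_eq_sum (fun w => L v w) v (hd v) (-1) (by norm_num), ← hr v, Finset.mul_sum,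
    ← Finset.sum_sub_distrib, ← Finset.sum_add_distrib]
  exact Finset.sum_congr rfl fun w _ => indicator_one_eq (he v w)

lemma sum_in_one (hL : IsDirEncoding dm dp L) (v : Fin n) :
    (∑ w, if L w v = 1 then 1 else 0 : ℤ) = dm v - 2 * zetaIn L v + etaIn L v := by
  obtain ⟨hd, he, -, hc⟩ := hL
  unfold zetaIn etaIn
  rw [ncard_line_eq_sum (fun w => L w v) v (hd v) 2 (by norm_num),
    ncard_line_eq_sum (fun w => L w v) v (hd v) (-1) (by norm_num), ← hc v, Finset.mul_sum,
    ← Finset.sum_sub_distrib, ← Finset.sum_add_distrib]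
  exact Finset.sum_congr rfl fun w _ => indicator_one_eq (he w v)

/-- The size of `N̂⁻(v)` is `d⁻_v - ζ⁻_v + 2 η⁻_v`. -/
lemma sum_in_ne_zero (hL : IsDirEncoding dm dp L) (v : Fin n) :
    (∑ w, if L w v ≠ 0 then 1 else 0 : ℤ) = dm v - zetaIn L v + 2 * etaIn L v := by
  obtain ⟨hd, he, -, hc⟩ := hL
  unfold zetaIn etaIn
  rw [ncard_line_eq_sum (fun w => L w v) v (hd v) 2 (by norm_num),
    ncard_line_eq_sum (fun w => L w v) v (hd v) (-1) (by norm_num), ← hc v, Finset.mul_sum,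
    ← Finset.sum_sub_distrib, ← Finset.sum_add_distrib]
  exact Finset.sum_congr rfl fun w _ => indicator_ne_zero_eq (he w v)

lemma sum_all_one (hL : IsDirEncoding dm dp L) :
    (∑ a, ∑ b, if L a b = 1 then 1 else 0 : ℤ) =
      ((∑ j, dp j : ℕ) : ℤ) - 2 * (labelArcs L 2).ncard + (labelArcs L (-1)).ncard := by
  obtain ⟨hd, he, hr, -⟩ := hL
  rw [ncard_labelArcs_eq_sum L hd 2 (by norm_num),
    ncard_labelArcs_eq_sum L hd (-1) (by norm_num)]
  push_cast
  simp_rw [← hr, Finset.mul_sum, ← Finset.sum_sub_distrib, ← Finset.sum_add_distrib]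
  exact Finset.sum_congr rfl fun a _ => Finset.sum_congr rfl fun b _ =>
    indicator_one_eq (he a b)

end Counts

/-- Lower bound on the number of ordered pairs `(a₂, b₂)` with `L(a₂,b₂) = 1`,
`L(a₂,b₁) = 0` and `a₁, b₁, a₂, b₂` all distinct. -/
theorem dir_choose_second_arc_lower_bound
    (dm dp : Fin n → ℕ) (hsum : ∑ j, dm j = ∑ j, dp j)
    (L : Matrix (Fin n) (Fin n) ℤ) (hL : IsDirEncoding dm dp L)
    (p q : ℕ)
    (hp : (labelArcs L 2).ncard = p)
    (hq : (labelArcs L (-1)).ncard = q)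
    (a1 b1 : Fin n) (hne : a1 ≠ b1) (hL1 : L a1 b1 ≠ 0) :
    ((∑ j, dm j : ℕ) : ℤ) - 2 * p + q -
        ((rmax dm dp : ℤ) *
            ((rmax dm dp : ℤ) - zetaIn L b1 + 2 * etaIn L b1 + 2)
          + etaIn L a1 + etaOut L b1
          - 2 * ((zetaIn L a1 : ℤ) + zetaOut L b1)
          + ∑ y ∈ Finset.univ.filter (· ∈ nbrInHat L b1),
              ((etaOut L y : ℤ) - 2 * zetaOut L y)) ≤
      ({ab : Fin n × Fin n |
          L ab.1 ab.2 = 1 ∧ L ab.1 b1 = 0 ∧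
          ab.1 ≠ a1 ∧ ab.1 ≠ b1 ∧ ab.2 ≠ a1 ∧ ab.2 ≠ b1 ∧ ab.1 ≠ ab.2}.ncard : ℤ) := by
  have hd := hL.1
  have hN : Finset.univ.filter (· ∈ nbrInHat L b1) = Finset.univ.filter (L · b1 ≠ 0) := by
    refine Finset.filter_congr fun w _ => ⟨fun h => h.2, fun h => ⟨?_, h⟩⟩
    rintro rfl
    exact h (hd w)
  rw [hN, ncard_setOf_eq_sum, Fintype.sum_prod_type]
  -- The union bound, arc by arc.
  have hpt : ∀ a b : Fin n,
      (if L a b = 1 then 1 else 0 : ℤ)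
        - (if L a b1 ≠ 0 then (if L a b = 1 then 1 else 0) else 0)
        - (if b = a1 then (if L a b = 1 then 1 else 0) else 0)
        - (if a = b1 then (if L a b = 1 then 1 else 0) else 0) ≤
      if L a b = 1 ∧ L a b1 = 0 ∧ a ≠ a1 ∧ a ≠ b1 ∧ b ≠ a1 ∧ b ≠ b1 ∧ a ≠ b then 1 else 0 := by
    intro a b
    have := hd a
    grind
  have hsumpt := Finset.sum_le_sum fun a (_ : a ∈ Finset.univ) =>
    Finset.sum_le_sum fun b (_ : b ∈ Finset.univ) => hpt a b
  simp only [Finset.sum_sub_distrib] at hsumpt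
  have hB1 : (∑ a, ∑ b, if L a b1 ≠ 0 then (if L a b = 1 then 1 else 0) else 0 : ℤ) =
      ∑ a ∈ Finset.univ.filter (L · b1 ≠ 0),
        ((dp a : ℤ) + ((etaOut L a : ℤ) - 2 * zetaOut L a)) := by
    rw [Finset.sum_filter]
    refine Finset.sum_congr rfl fun a _ => ?_
    split_ifs with h
    · rw [sum_out_one hL]; ring
    · simp
  have hB2 : (∑ a, ∑ b, if b = a1 then (if L a b = 1 then 1 else 0) else 0 : ℤ) =
      dm a1 - 2 * zetaIn L a1 + etaIn L a1 := by
    rw [← sum_in_one hL]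
    simp
  have hB3 : (∑ a, ∑ b, if a = b1 then (if L a b = 1 then 1 else 0) else 0 : ℤ) =
      dp b1 - 2 * zetaOut L b1 + etaOut L b1 := by
    rw [← sum_out_one hL, Finset.sum_comm]
    simp
  rw [hB1, hB2, hB3, sum_all_one hL, hp, hq, ← hsum, Finset.sum_add_distrib] at hsumpt
  have hr0 : (0 : ℤ) ≤ rmax dm dp := Int.natCast_nonneg _
  have hdp : ∀ v, (dp v : ℤ) ≤ rmax dm dp := fun v => by exact_mod_cast dp_le_rmax dm dp v
  have hdm : ∀ v, (dm v : ℤ) ≤ rmax dm dp := fun v => by exact_mod_cast dm_le_rmax dm dp v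
  have hcard : (∑ a ∈ Finset.univ.filter (L · b1 ≠ 0), (dp a : ℤ)) ≤
      (rmax dm dp : ℤ) * ((rmax dm dp : ℤ) - zetaIn L b1 + 2 * etaIn L b1) := by
    calc (∑ a ∈ Finset.univ.filter (L · b1 ≠ 0), (dp a : ℤ))
        ≤ ∑ a ∈ Finset.univ.filter (L · b1 ≠ 0), (rmax dm dp : ℤ) * 1 :=
          Finset.sum_le_sum fun a _ => by rw [mul_one]; exact hdp a
      _ = (rmax dm dp : ℤ) * (dm b1 - zetaIn L b1 + 2 * etaIn L b1) := by
          rw [← Finset.mul_sum, Finset.sum_filter, sum_in_ne_zero hL]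
      _ ≤ _ := mul_le_mul_of_nonneg_left (by linarith [hdm b1]) hr0
  refine le_trans ?_ hsumpt
  linarith [hdm a1, hdp b1]

end DirectedSwitchChain
end
end
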